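/- arXiv:math/0401091 — 3 statements merged into one kernel-verified Lean document; each statement's English description precedes it below -/
import Mathlib

section
/- Let H be a complex Hilbert space and let A ∈ B(H) be hyponormal (A*A − AA* ≥ 0) of finite multiplicity, i.e., there are finitely many vectors x_1, …, x_m ∈ H such that the closed linear span of {Aⁿ x_j : n ≥ 0, 1 ≤ j ≤ m} equals H. Let B ∈ B(H) be such that B* is hyponormal (BB* − B*B ≥ 0). Then for every X ∈ B(H): if AX − XB is Hilbert–Schmidt, then A*X − XB* is Hilbert–Schmidt and ‖A*X − XB*‖₂ ≤ ‖AX − XB‖₂ (equivalently, with the convention ‖Y‖₂ = ∞ for non-Hilbert–Schmidt Y, one has ‖AX − XB‖₂ ≥ ‖A*X − XB*‖₂ for all X ∈ B(H)). -/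
open ContinuousLinearMap
open scoped ENNReal NNReal

/-- The squared Hilbert–Schmidt norm of an operator, computed in the Hilbert basis `b`
(the value is independent of the choice of basis); it equals `∞` precisely when the
operator is not Hilbert–Schmidt. -/
noncomputable def hsNormSq {E F : Type*} [NormedAddCommGroup E] [InnerProductSpace ℂ E]
    [NormedAddCommGroup F] [InnerProductSpace ℂ F] {ι : Type*} (b : HilbertBasis ι ℂ E)
    (T : E →L[ℂ] F) : ℝ≥0∞ :=
  ∑' i, (‖T (b i)‖₊ : ℝ≥0∞) ^ 2

section aux

set_option linter.unusedSectionVars false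

open Filter Topology

lemma komlos {K : Type*} [NormedAddCommGroup K] [NormedSpace ℝ K]
    (hpar : ∀ x y : K, ‖x + y‖ ^ 2 + ‖x - y‖ ^ 2 = 2 * (‖x‖ ^ 2 + ‖y‖ ^ 2))
    (C : ℕ → Set K) (hC : ∀ k, Convex ℝ (C k)) (hne : ∀ k, (C k).Nonempty)
    (hanti : Antitone C) (M : ℝ) (hM : ∀ x ∈ C 0, ‖x‖ ≤ M) :
    ∃ w : ℕ → K, (∀ k, w k ∈ C k) ∧ CauchySeq w := by
  set d : ℕ → ℝ := fun k => sInf ((fun x => ‖x‖ ^ 2) '' C k) with hd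
  have hbdd : ∀ k, BddBelow ((fun x : K => ‖x‖ ^ 2) '' C k) := fun k =>
    ⟨0, by rintro _ ⟨x, -, rfl⟩; positivity⟩
  have hdle : ∀ k, ∀ x ∈ C k, d k ≤ ‖x‖ ^ 2 := fun k x hx => csInf_le (hbdd k) ⟨x, hx, rfl⟩
  have hex : ∀ k : ℕ, ∃ x ∈ C k, ‖x‖ ^ 2 < d k + 1 / ((k : ℝ) + 1) := by
    intro k
    have : sInf ((fun x : K => ‖x‖ ^ 2) '' C k) < d k + 1 / ((k : ℝ) + 1) := by
      have : (0 : ℝ) < 1 / ((k : ℝ) + 1) := by positivity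
      simp only [hd]; linarith
    obtain ⟨_, ⟨x, hx, rfl⟩, h⟩ := exists_lt_of_csInf_lt ((hne k).image _) this
    exact ⟨x, hx, h⟩
  choose w hw hwd using hex
  have hmono : Monotone d := fun k l hkl =>
    csInf_le_csInf (hbdd k) ((hne l).image _) (Set.image_mono (hanti hkl))
  have hbound : BddAbove (Set.range d) := by
    refine ⟨M ^ 2, ?_⟩
    rintro _ ⟨k, rfl⟩
    have h := hM (w k) (hanti (Nat.zero_le k) (hw k))
    exact (hdle k _ (hw k)).trans (by gcongr)
  have hlim := tendsto_atTop_ciSup hmono hbound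
  set D := ⨆ k, d k
  have hdD : ∀ k, d k ≤ D := fun k => le_ciSup hbound k
  refine ⟨w, hw, ?_⟩
  have key : ∀ k l, k ≤ l → ‖w k - w l‖ ^ 2 ≤ 2 * (D - d k) + 4 * (1 / ((k : ℝ) + 1)) := by
    intro k l hkl
    have hmid : (1 / 2 : ℝ) • w k + (1 / 2 : ℝ) • w l ∈ C k :=
      hC k (hw k) (hanti hkl (hw l)) (by norm_num) (by norm_num) (by norm_num)
    have h1 := hdle k _ hmid
    rw [← smul_add, norm_smul, mul_pow] at h1
    norm_num at h1
    have h2 := hpar (w k) (w l)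
    have h3 := hwd k
    have h4 := hwd l
    have h5 := hdD l
    have h6 : 1 / ((l : ℝ) + 1) ≤ 1 / ((k : ℝ) + 1) := by gcongr
    linarith
  have hz : Tendsto (fun k : ℕ => √(2 * (D - d k) + 4 * (1 / ((k : ℝ) + 1)))) atTop (𝓝 0) := by
    have h1 : Tendsto (fun k : ℕ => 2 * (D - d k) + 4 * (1 / ((k : ℝ) + 1))) atTop
        (𝓝 (2 * (D - D) + 4 * 0)) :=
      ((hlim.const_sub D).const_mul 2).add (tendsto_one_div_add_atTop_nhds_zero_nat.const_mul 4)
    have := (Real.continuous_sqrt.tendsto _).comp h1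
    simpa [Function.comp_def] using this
  rw [Metric.cauchySeq_iff']
  intro ε hε
  obtain ⟨N, hN⟩ := (hz.eventually (gt_mem_nhds hε)).exists
  refine ⟨N, fun n hn => ?_⟩
  rw [dist_comm, dist_eq_norm]
  exact (Real.le_sqrt_of_sq_le (key N n hn)).trans_lt hN

variable {H : Type*} [NormedAddCommGroup H] [InnerProductSpace ℂ H] [CompleteSpace H]
    {ι : Type*} (b : HilbertBasis ι ℂ H)

lemma parseval_enn (v : H) : (‖v‖₊ : ℝ≥0∞) ^ 2 = ∑' j, (‖inner ℂ (b j) v‖₊ : ℝ≥0∞) ^ 2 := by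
  have h := lp.hasSum_norm (p := 2) (by norm_num) (b.repr v)
  simp only [HilbertBasis.repr_apply_apply, LinearIsometryEquiv.norm_map, ENNReal.toReal_ofNat,
    Real.rpow_two] at h
  have h' : HasSum (fun j => ‖inner ℂ (b j) v‖₊ ^ 2) (‖v‖₊ ^ 2) := by
    rw [← NNReal.hasSum_coe]; push_cast; exact h
  have := (ENNReal.hasSum_coe.2 h').tsum_eq
  push_cast at this
  exact this.symm

lemma hs_adjoint (T : H →L[ℂ] H) : hsNormSq b (adjoint T) = hsNormSq b T := by
  unfold hsNormSq
  simp_rw [parseval_enn b]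
  rw [ENNReal.tsum_comm]
  refine tsum_congr fun i => tsum_congr fun j => ?_
  rw [ContinuousLinearMap.adjoint_inner_right]
  congr 2
  rw [← NNReal.coe_inj, coe_nnnorm, coe_nnnorm, norm_inner_symm]

lemma hs_mono {S T : H →L[ℂ] H} (h : ∀ v, ‖S v‖ ≤ ‖T v‖) : hsNormSq b S ≤ hsNormSq b T := by
  unfold hsNormSq
  refine ENNReal.tsum_le_tsum fun i => ?_
  have : ‖S (b i)‖₊ ≤ ‖T (b i)‖₊ := h _
  gcongr

lemma hs_left (S T : H →L[ℂ] H) :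
    hsNormSq b (S ∘L T) ≤ (‖S‖₊ : ℝ≥0∞) ^ 2 * hsNormSq b T := by
  unfold hsNormSq
  rw [← ENNReal.tsum_mul_left]
  refine ENNReal.tsum_le_tsum fun i => ?_
  have : ‖S (T (b i))‖₊ ≤ ‖S‖₊ * ‖T (b i)‖₊ := S.le_opNNNorm _
  rw [← mul_pow]
  gcongr
  exact_mod_cast this

lemma hs_right (S T : H →L[ℂ] H) :
    hsNormSq b (S ∘L T) ≤ (‖T‖₊ : ℝ≥0∞) ^ 2 * hsNormSq b S := by
  rw [← hs_adjoint b (S ∘L T), adjoint_comp, ← hs_adjoint b S]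
  refine (hs_left b _ _).trans ?_
  rw [LinearIsometryEquiv.nnnorm_map]

/-- finite rank bound -/
lemma hs_finrank (V : Submodule ℂ H) [FiniteDimensional ℂ V] (T : H →L[ℂ] H)
    (hT : ∀ v, T v ∈ V) :
    hsNormSq b T ≤ (Module.finrank ℂ V : ℝ≥0∞) * (‖T‖₊ : ℝ≥0∞) ^ 2 := by
  let e := stdOrthonormalBasis ℂ V
  have h1 : ∀ v, (‖T v‖₊ : ℝ≥0∞) ^ 2
      = ∑ j, (‖inner ℂ v (adjoint T (e j : H))‖₊ : ℝ≥0∞) ^ 2 := by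
    intro v
    have h := e.sum_sq_norm_inner_left ⟨T v, hT v⟩
    have h' : ∑ j, ‖inner ℂ v (adjoint T (e j : H))‖₊ ^ 2 = ‖T v‖₊ ^ 2 := by
      rw [← NNReal.coe_inj]; push_cast
      simp only [ContinuousLinearMap.adjoint_inner_right]
      exact h
    exact_mod_cast h'.symm
  unfold hsNormSq
  simp_rw [h1]
  rw [Summable.tsum_finsetSum (fun _ _ => ENNReal.summable)]
  simp_rw [← parseval_enn b]
  calc _ ≤ ∑ j : Fin (Module.finrank ℂ V), (‖T‖₊ : ℝ≥0∞) ^ 2 := by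
        refine Finset.sum_le_sum fun j _ => ?_
        have h2 := (adjoint T).le_opNNNorm (e j : H)
        have h3 : ‖(e j : H)‖₊ = 1 := by
          rw [← NNReal.coe_inj]; exact e.orthonormal.1 j
        rw [h3, mul_one, LinearIsometryEquiv.nnnorm_map] at h2
        gcongr
    _ = _ := by simp

lemma hs_mem_iff (T : H →L[ℂ] H) :
    Memℓp (fun i => T (b i)) 2 ↔ hsNormSq b T ≠ ∞ := by
  rw [memℓp_gen_iff (by norm_num)]
  unfold hsNormSq
  simp only [ENNReal.toReal_ofNat, Real.rpow_two]
  rw [show (∑' i, (‖T (b i)‖₊ : ℝ≥0∞) ^ 2) = ∑' i, ((‖T (b i)‖₊ ^ 2 : ℝ≥0) : ℝ≥0∞) by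
    push_cast; rfl, ENNReal.tsum_coe_ne_top_iff_summable, ← NNReal.summable_coe]
  push_cast
  rfl

/-- Hilbert–Schmidt operators -/
def HSsub : Submodule ℝ (H →L[ℂ] H) where
  carrier := {T | Memℓp (fun i => T (b i)) 2}
  add_mem' h1 h2 := h1.add h2
  zero_mem' := zero_memℓp
  smul_mem' c _ h := h.const_smul c

/-- The `ℓ²` vector of a Hilbert–Schmidt operator. -/
noncomputable def toL : HSsub b →ₗ[ℝ] lp (fun _ : ι => H) 2 where
  toFun T := ⟨fun i => (T : H →L[ℂ] H) (b i), T.2⟩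
  map_add' _ _ := rfl
  map_smul' _ _ := rfl

lemma mem_HS (T : H →L[ℂ] H) : T ∈ HSsub b ↔ hsNormSq b T ≠ ∞ := hs_mem_iff b T

lemma hs_eq_norm (T : HSsub b) : hsNormSq b (T : H →L[ℂ] H) = (‖toL b T‖₊ : ℝ≥0∞) ^ 2 := by
  have h := lp.hasSum_norm (p := 2) (by norm_num) (toL b T)
  simp only [ENNReal.toReal_ofNat, Real.rpow_two] at h
  have h' : HasSum (fun j => ‖(T : H →L[ℂ] H) (b j)‖₊ ^ 2) (‖toL b T‖₊ ^ 2) := by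
    rw [← NNReal.hasSum_coe]; push_cast; exact h
  have := (ENNReal.hasSum_coe.2 h').tsum_eq
  push_cast at this
  exact this

lemma HS_left (S : H →L[ℂ] H) {T : H →L[ℂ] H} (h : T ∈ HSsub b) : S ∘L T ∈ HSsub b := by
  rw [mem_HS] at *
  exact ne_top_of_le_ne_top (ENNReal.mul_ne_top (by simp) h) (hs_left b S T)

lemma HS_right {S : H →L[ℂ] H} (T : H →L[ℂ] H) (h : S ∈ HSsub b) : S ∘L T ∈ HSsub b := by
  rw [mem_HS] at *
  exact ne_top_of_le_ne_top (ENNReal.mul_ne_top (by simp) h) (hs_right b S T)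

lemma HS_adj {S : H →L[ℂ] H} (h : S ∈ HSsub b) : adjoint S ∈ HSsub b := by
  rw [mem_HS] at *
  rwa [hs_adjoint]

lemma norm_le_of_hs {S T : HSsub b} (h : hsNormSq b (S : H →L[ℂ] H) ≤ hsNormSq b (T : H →L[ℂ] H)) :
    ‖toL b S‖ ≤ ‖toL b T‖ := by
  rw [hs_eq_norm, hs_eq_norm] at h
  have h2 : ‖toL b S‖₊ ^ 2 ≤ ‖toL b T‖₊ ^ 2 := by exact_mod_cast h
  have h3 : ‖toL b S‖₊ ≤ ‖toL b T‖₊ := (pow_le_pow_iff_left₀ zero_le zero_le two_ne_zero).1 h2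
  exact h3

lemma norm_adj (S : HSsub b) : ‖toL b ⟨adjoint (S : H →L[ℂ] H), HS_adj b S.2⟩‖ = ‖toL b S‖ := by
  apply le_antisymm <;> apply norm_le_of_hs <;> simp only [hs_adjoint, le_refl]

lemma re_inner_adj (S T : HSsub b) :
    (inner ℂ (toL b ⟨adjoint (S : H →L[ℂ] H), HS_adj b S.2⟩)
      (toL b ⟨adjoint (T : H →L[ℂ] H), HS_adj b T.2⟩)).re = (inner ℂ (toL b S) (toL b T)).re := by
  have h1 := norm_add_sq (𝕜 := ℂ) (toL b S) (toL b T)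
  have h2 := norm_add_sq (𝕜 := ℂ) (toL b ⟨adjoint (S : H →L[ℂ] H), HS_adj b S.2⟩)
      (toL b ⟨adjoint (T : H →L[ℂ] H), HS_adj b T.2⟩)
  rw [norm_adj, norm_adj, ← map_add] at h2
  rw [← map_add] at h1
  have h3 := norm_adj b (S + T)
  have h4 : (⟨adjoint ((S + T : HSsub b) : H →L[ℂ] H), HS_adj b (S + T).2⟩ : HSsub b)
     = ⟨adjoint (S : H →L[ℂ] H), HS_adj b S.2⟩ + ⟨adjoint (T : H →L[ℂ] H), HS_adj b T.2⟩ := by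
    ext1; simp
  rw [h4] at h3
  rw [h3] at h2
  simp only [RCLike.re_to_complex] at h1 h2
  linarith

lemma inner_toL (S T : HSsub b) : inner ℂ (toL b S) (toL b T)
    = ∑' i, inner ℂ ((S : H →L[ℂ] H) (b i)) ((T : H →L[ℂ] H) (b i)) := lp.inner_eq_tsum _ _

lemma re_inner_left (A : H →L[ℂ] H) (S T : HSsub b) :
    (inner ℂ (toL b ⟨A ∘L S, HS_left b A S.2⟩) (toL b T)).re
    = (inner ℂ (toL b S) (toL b ⟨adjoint A ∘L T, HS_left b _ T.2⟩)).re := by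
  rw [inner_toL, inner_toL]
  simp [ContinuousLinearMap.adjoint_inner_right]

lemma re_inner_right (B : H →L[ℂ] H) (S T : HSsub b) :
    (inner ℂ (toL b ⟨(S : H →L[ℂ] H) ∘L B, HS_right b B S.2⟩) (toL b T)).re
    = (inner ℂ (toL b S) (toL b ⟨(T : H →L[ℂ] H) ∘L adjoint B, HS_right b _ T.2⟩)).re := by
  rw [← re_inner_adj, ← re_inner_adj b S]
  have := re_inner_left b (adjoint B) ⟨adjoint (S : H →L[ℂ] H), HS_adj b S.2⟩
    ⟨adjoint (T : H →L[ℂ] H), HS_adj b T.2⟩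
  simpa only [adjoint_comp] using this

lemma hypo_norm (A : H →L[ℂ] H) (hA : IsPositive (adjoint A ∘L A - A ∘L adjoint A)) (v : H) :
    ‖adjoint A v‖ ≤ ‖A v‖ := by
  have h := hA.re_inner_nonneg_right v
  simp only [sub_apply, comp_apply, inner_sub_right, map_sub] at h
  rw [adjoint_inner_right, ← adjoint_inner_left A (adjoint A v) v, inner_self_eq_norm_sq,
    inner_self_eq_norm_sq] at h
  exact (pow_le_pow_iff_left₀ (norm_nonneg _) (norm_nonneg _) two_ne_zero).1 (by linarith)

/-- Berberian's inequality for Hilbert–Schmidt `Z`. -/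
lemma berberian (A : H →L[ℂ] H) (hA : IsPositive (adjoint A ∘L A - A ∘L adjoint A))
    (B : H →L[ℂ] H) (hB : IsPositive (B ∘L adjoint B - adjoint B ∘L B)) (Z : H →L[ℂ] H)
    (hZ : Z ∈ HSsub b) :
    hsNormSq b (adjoint A ∘L Z - Z ∘L adjoint B) ≤ hsNormSq b (A ∘L Z - Z ∘L B) := by
  have hB' : IsPositive (adjoint (adjoint B) ∘L adjoint B - adjoint B ∘L adjoint (adjoint B)) := by
    rwa [adjoint_adjoint]
  have key : ∀ (A B : H →L[ℂ] H), hsNormSq b (A ∘L Z - Z ∘L B) =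
      ENNReal.ofReal (‖toL b ⟨A ∘L Z, HS_left b A hZ⟩‖ ^ 2
        - 2 * (inner ℂ (toL b ⟨A ∘L Z, HS_left b A hZ⟩) (toL b ⟨Z ∘L B, HS_right b B hZ⟩)).re
        + ‖toL b ⟨Z ∘L B, HS_right b B hZ⟩‖ ^ 2) := by
    intro A B
    have := norm_sub_sq (𝕜 := ℂ) (toL b ⟨A ∘L Z, HS_left b A hZ⟩) (toL b ⟨Z ∘L B, HS_right b B hZ⟩)
    rw [RCLike.re_to_complex] at this
    rw [← this, ← map_sub, ENNReal.ofReal_pow (norm_nonneg _), ofReal_norm]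
    have h := hs_eq_norm b (⟨A ∘L Z, HS_left b A hZ⟩ - ⟨Z ∘L B, HS_right b B hZ⟩)
    rw [Submodule.coe_sub] at h
    rw [enorm_eq_nnnorm]
    exact h
  rw [key, key]
  apply ENNReal.ofReal_le_ofReal
  have h1 : ‖toL b ⟨adjoint A ∘L Z, HS_left b _ hZ⟩‖ ≤ ‖toL b ⟨A ∘L Z, HS_left b A hZ⟩‖ :=
    norm_le_of_hs b (hs_mono b fun v => hypo_norm A hA (Z v))
  have h2 : ‖toL b ⟨Z ∘L adjoint B, HS_right b _ hZ⟩‖ ≤ ‖toL b ⟨Z ∘L B, HS_right b B hZ⟩‖ := by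
    apply norm_le_of_hs
    dsimp only
    rw [← hs_adjoint b (Z ∘L B), ← hs_adjoint b (Z ∘L adjoint B), adjoint_comp, adjoint_comp]
    exact hs_mono b fun v => hypo_norm _ hB' (adjoint Z v)
  have h3 : (inner ℂ (toL b ⟨adjoint A ∘L Z, HS_left b _ hZ⟩)
        (toL b ⟨Z ∘L adjoint B, HS_right b _ hZ⟩)).re
      = (inner ℂ (toL b ⟨A ∘L Z, HS_left b A hZ⟩) (toL b ⟨Z ∘L B, HS_right b B hZ⟩)).re := by
    have e1 := re_inner_left b (adjoint A) ⟨Z, hZ⟩ ⟨Z ∘L adjoint B, HS_right b _ hZ⟩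
    have e2 := re_inner_right b B ⟨Z, hZ⟩ ⟨A ∘L Z, HS_left b A hZ⟩
    simp only [adjoint_adjoint] at e1
    rw [e1, ← RCLike.re_to_complex, ← RCLike.re_to_complex, inner_re_symm (𝕜 := ℂ) (toL b ⟨A ∘L Z, _⟩)]
    simp only [RCLike.re_to_complex]
    rw [e2]
    rfl
  rw [h3]
  gcongr

lemma hs_pyth (V : Submodule ℂ H) [V.HasOrthogonalProjection] (T : H →L[ℂ] H) :
    hsNormSq b T = hsNormSq b (V.starProjection ∘L T)
      + hsNormSq b (T - V.starProjection ∘L T) := by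
  unfold hsNormSq
  rw [← ENNReal.tsum_add]
  refine tsum_congr fun i => ?_
  have h := V.norm_sq_eq_add_norm_sq_starProjection (T (b i))
  rw [Submodule.starProjection_orthogonal_val] at h
  have h' : ‖T (b i)‖₊ ^ 2 = ‖V.starProjection (T (b i))‖₊ ^ 2
      + ‖T (b i) - V.starProjection (T (b i))‖₊ ^ 2 := by
    rw [← NNReal.coe_inj]; push_cast; exact h
  simp only [sub_apply, comp_apply]
  exact_mod_cast h'

lemma hs_offdiag (V : Submodule ℂ H) [FiniteDimensional ℂ V] (A : H →L[ℂ] H)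
    (hA : IsPositive (adjoint A ∘L A - A ∘L adjoint A)) :
    hsNormSq b (V.starProjection ∘L A - V.starProjection ∘L A ∘L V.starProjection)
      ≤ hsNormSq b (A ∘L V.starProjection - V.starProjection ∘L A ∘L V.starProjection) := by
  set P := V.starProjection with hP
  have hPs : adjoint P = P := (isSelfAdjoint_starProjection V).adjoint_eq
  have e1 : adjoint (P ∘L A - P ∘L A ∘L P) = adjoint A ∘L P - P ∘L adjoint A ∘L P := by
    rw [map_sub, adjoint_comp, adjoint_comp, adjoint_comp, hPs]
    rfl
  have e2 : adjoint (P ∘L A ∘L P) = P ∘L adjoint A ∘L P := by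
    rw [adjoint_comp, adjoint_comp, hPs]
    rfl
  have h1 := hs_pyth b V (adjoint A ∘L P)
  have h2 := hs_pyth b V (A ∘L P)
  rw [← hP] at h1 h2
  have h3 : hsNormSq b (adjoint A ∘L P) ≤ hsNormSq b (A ∘L P) :=
    hs_mono b fun v => hypo_norm A hA (P v)
  have h4 : hsNormSq b (P ∘L A ∘L P) ≠ ∞ := by
    refine ne_top_of_le_ne_top ?_ (hs_finrank b V _ fun v => V.starProjection_apply_mem _)
    exact ENNReal.mul_ne_top (by simp) (by simp)
  rw [h1, h2, ← e1, hs_adjoint, ← e2, hs_adjoint] at h3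
  exact (ENNReal.add_le_add_iff_left h4).1 h3

lemma norm_le_of_hs' {S : HSsub b} {q : ℝ≥0} (h : hsNormSq b (S : H →L[ℂ] H) ≤ q) :
    ‖toL b S‖ ≤ NNReal.sqrt q := by
  rw [hs_eq_norm] at h
  have h2 : ‖toL b S‖₊ ^ 2 ≤ q := by exact_mod_cast h
  have : ‖toL b S‖₊ ≤ NNReal.sqrt q := by rwa [NNReal.le_sqrt_iff_sq_le]
  exact this

lemma hs_cut (V : Submodule ℂ H) [FiniteDimensional ℂ V] (T : H →L[ℂ] H) :
    V.starProjection ∘L T ∈ HSsub b := by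
  rw [mem_HS]
  refine ne_top_of_le_ne_top ?_ (hs_finrank b V _ fun v => V.starProjection_apply_mem _)
  exact ENNReal.mul_ne_top (by simp) (by simp)

lemma HS_ad (A B : H →L[ℂ] H) {Z : H →L[ℂ] H} (hZ : Z ∈ HSsub b) :
    A ∘L Z - Z ∘L B ∈ HSsub b := by
  have h1 := HS_left b A hZ
  have h2 := HS_right b B hZ
  exact Submodule.sub_mem _ h1 h2

/-- `AZ - ZB` as a Hilbert–Schmidt operator -/
def adFun (A B : H →L[ℂ] H) (Z : HSsub b) : HSsub b :=
  ⟨A ∘L Z.1 - Z.1 ∘L B, HS_ad b A B Z.2⟩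

lemma adFun_apply (A B : H →L[ℂ] H) (Z : HSsub b) (v : H) :
    (adFun b A B Z : H →L[ℂ] H) v = A ((Z : H →L[ℂ] H) v) - (Z : H →L[ℂ] H) (B v) := rfl

/-- `Z ↦ AZ - ZB` on Hilbert–Schmidt operators. -/
noncomputable def adHS (A B : H →L[ℂ] H) : HSsub b →ₗ[ℝ] HSsub b where
  toFun := adFun b A B
  map_add' Y Z := by
    apply Subtype.ext
    ext v
    simp only [adFun_apply, Submodule.coe_add, add_apply, map_add]
    abel
  map_smul' c Z := by
    apply Subtype.ext
    ext v
    simp [adFun_apply, smul_sub]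

/-- `Z ↦ AZ - ZB` as a map from Hilbert–Schmidt operators to `ℓ²`. -/
noncomputable def derL (A B : H →L[ℂ] H) : HSsub b →ₗ[ℝ] lp (fun _ : ι => H) 2 :=
  toL b ∘ₗ adHS b A B

lemma derL_apply (A B : H →L[ℂ] H) (Z : HSsub b) (i : ι) :
    (derL b A B Z) i = A ((Z : H →L[ℂ] H) (b i)) - (Z : H →L[ℂ] H) (B (b i)) := rfl

lemma derL_bound (m : ℕ) (V W : Submodule ℂ H) [FiniteDimensional ℂ V] [FiniteDimensional ℂ W]
    (hW : Module.finrank ℂ W ≤ m) (A B X : H →L[ℂ] H)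
    (hA : IsPositive (adjoint A ∘L A - A ∘L adjoint A))
    (hVW : ∀ v ∈ V, A v - V.starProjection (A v) ∈ W)
    (hT : A ∘L X - X ∘L B ∈ HSsub b) :
    ‖derL b A B ⟨V.starProjection ∘L X, hs_cut b V X⟩‖ ≤
      ‖toL b ⟨_, hT⟩‖ + 2 * NNReal.sqrt (‖X‖₊ ^ 2 * (m * (2 * ‖A‖₊) ^ 2)) := by
  set P := V.starProjection with hP
  set D := A ∘L P - P ∘L A ∘L P with hD
  set E := P ∘L A - P ∘L A ∘L P with hE
  have hDn : ‖D‖₊ ≤ 2 * ‖A‖₊ := by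
    have hP1 : ‖P‖ ≤ 1 := V.starProjection_norm_le
    have h1 : ‖A ∘L P‖ ≤ ‖A‖ :=
      (opNorm_comp_le _ _).trans (mul_le_of_le_one_right (norm_nonneg _) hP1)
    have h2 : ‖P ∘L A ∘L P‖ ≤ ‖A‖ :=
      (opNorm_comp_le _ _).trans ((mul_le_of_le_one_left (norm_nonneg _) hP1).trans h1)
    have h3 : ‖D‖ ≤ 2 * ‖A‖ := (norm_sub_le _ _).trans (by linarith)
    exact h3
  have hDhs : hsNormSq b D ≤ ((m * (2 * ‖A‖₊) ^ 2 : ℝ≥0) : ℝ≥0∞) := by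
    refine (hs_finrank b W D fun v => hVW _ (V.starProjection_apply_mem v)).trans ?_
    have : (Module.finrank ℂ W : ℝ≥0) * ‖D‖₊ ^ 2 ≤ m * (2 * ‖A‖₊) ^ 2 := by gcongr
    exact_mod_cast this
  have hEhs : hsNormSq b E ≤ ((m * (2 * ‖A‖₊) ^ 2 : ℝ≥0) : ℝ≥0∞) := 
    (hs_offdiag b V A hA).trans hDhs
  have hmul : ∀ Y : H →L[ℂ] H, hsNormSq b Y ≤ ((m * (2 * ‖A‖₊) ^ 2 : ℝ≥0) : ℝ≥0∞) →
      hsNormSq b (Y ∘L X) ≤ ((‖X‖₊ ^ 2 * (m * (2 * ‖A‖₊) ^ 2) : ℝ≥0) : ℝ≥0∞) := by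
    intro Y hY
    refine (hs_right b Y X).trans ?_
    rw [ENNReal.coe_mul, ENNReal.coe_pow]
    gcongr
  have hDm : D ∘L X ∈ HSsub b := by
    rw [mem_HS]; exact ne_top_of_le_ne_top ENNReal.coe_ne_top (hmul D hDhs)
  have hEm : E ∘L X ∈ HSsub b := by
    rw [mem_HS]; exact ne_top_of_le_ne_top ENNReal.coe_ne_top (hmul E hEhs)
  have hsplit : derL b A B ⟨P ∘L X, hs_cut b V X⟩ =
      toL b ⟨P ∘L (A ∘L X - X ∘L B), hs_cut b V _⟩ + toL b ⟨D ∘L X, hDm⟩ - toL b ⟨E ∘L X, hEm⟩ := by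
    rw [← map_add, ← map_sub]
    have : adHS b A B ⟨P ∘L X, hs_cut b V X⟩ =
      ⟨P ∘L (A ∘L X - X ∘L B), hs_cut b V _⟩ + ⟨D ∘L X, hDm⟩ - ⟨E ∘L X, hEm⟩ := by
      apply Subtype.ext
      ext v
      simp [adHS, adFun_apply, hD, hE]
      abel
    rw [← this]
    rfl
  have n1 : ‖toL b ⟨P ∘L (A ∘L X - X ∘L B), hs_cut b V _⟩‖ ≤ ‖toL b ⟨_, hT⟩‖ :=
    norm_le_of_hs b (hs_mono b fun v => V.norm_starProjection_apply_le _)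
  have n2 : ‖toL b ⟨D ∘L X, hDm⟩‖ ≤ _ := norm_le_of_hs' b (hmul D hDhs)
  have n3 : ‖toL b ⟨E ∘L X, hEm⟩‖ ≤ _ := norm_le_of_hs' b (hmul E hEhs)
  rw [hsplit]
  refine (norm_sub_le _ _).trans ?_
  have := norm_add_le (toL b ⟨P ∘L (A ∘L X - X ∘L B), hs_cut b V _⟩) (toL b ⟨D ∘L X, hDm⟩)
  linarith

/-- Krylov subspaces -/
def kry (A : H →L[ℂ] H) {m : ℕ} (x : Fin m → H) (n : ℕ) : Submodule ℂ H :=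
  Submodule.span ℂ (Set.range fun q : Fin m × Fin n => (A ^ (q.2 : ℕ)) (x q.1))

instance kry_fin (A : H →L[ℂ] H) {m : ℕ} (x : Fin m → H) (n : ℕ) :
    FiniteDimensional ℂ (kry A x n) :=
  FiniteDimensional.span_of_finite ℂ (Set.finite_range _)

lemma kry_mem (A : H →L[ℂ] H) {m : ℕ} (x : Fin m → H) {n p : ℕ} (h : p < n) (j : Fin m) :
    (A ^ p) (x j) ∈ kry A x n :=
  Submodule.subset_span ⟨(j, ⟨p, h⟩), rfl⟩

lemma kry_mono (A : H →L[ℂ] H) {m : ℕ} (x : Fin m → H) : Monotone (kry A x) := by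
  intro k l hkl
  refine Submodule.span_le.2 ?_
  rintro _ ⟨⟨j, p⟩, rfl⟩
  exact kry_mem A x (p.2.trans_le hkl) j

lemma kry_step (A : H →L[ℂ] H) {m : ℕ} (x : Fin m → H) (n : ℕ) (v : H) (hv : v ∈ kry A x n) :
    A v - (kry A x n).starProjection (A v) ∈ Submodule.span ℂ (Set.range fun j : Fin m =>
      (A ^ n) (x j) - (kry A x n).starProjection ((A ^ n) (x j))) := by
  refine Submodule.span_induction (p := fun v _ => A v - (kry A x n).starProjection (A v) ∈ _)
    ?_ ?_ ?_ ?_ hv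
  · rintro _ ⟨⟨j, p⟩, rfl⟩
    have e : A ((A ^ (p : ℕ)) (x j)) = (A ^ ((p : ℕ) + 1)) (x j) := by
      rw [pow_succ']; rfl
    simp only [e]
    rcases (Nat.succ_le_of_lt p.2).lt_or_eq with h | h
    · rw [Submodule.starProjection_eq_self_iff.2 (kry_mem A x h j), sub_self]
      exact Submodule.zero_mem _
    · have h' : (p : ℕ) + 1 = n := h
      rw [h']
      exact Submodule.subset_span ⟨j, rfl⟩
  · simp
  · intro u w _ _ hu hw
    have := Submodule.add_mem _ hu hw
    convert! this using 1
    simp only [map_add]; abel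
  · intro c u _ hu
    have := Submodule.smul_mem _ c hu
    convert! this using 1
    simp only [map_smul, smul_sub]

lemma tail_conv (X : H →L[ℂ] H) (z : ℕ → HSsub b)
    (hz : ∀ h, Tendsto (fun n => (z n : H →L[ℂ] H) h) atTop (𝓝 (X h)))
    (Z : ℕ → HSsub b) (hZ : ∀ k, Z k ∈ convexHull ℝ (z '' Set.Ici k)) (h : H) :
    Tendsto (fun n => (Z n : H →L[ℂ] H) h) atTop (𝓝 (X h)) := by
  rw [Metric.tendsto_atTop]
  intro ε hε
  obtain ⟨N, hN⟩ := Metric.tendsto_atTop.1 (hz h) ε hε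
  refine ⟨N, fun n hn => ?_⟩
  have hconv : Convex ℝ {Y : HSsub b | (Y : H →L[ℂ] H) h ∈ Metric.ball (X h) ε} := by
    intro Y hY Y' hY' s t hs ht hst
    exact convex_ball (X h) ε hY hY' hs ht hst
  refine convexHull_min ?_ hconv (hZ n)
  rintro _ ⟨k, hk, rfl⟩
  exact hN k (hn.trans hk)

lemma main_aux (A : H →L[ℂ] H) (hA : IsPositive (adjoint A ∘L A - A ∘L adjoint A))
    {m : ℕ} (x : Fin m → H)
    (hx : (Submodule.span ℂ {v : H | ∃ (j : Fin m) (p : ℕ), v = (A ^ p) (x j)}).topologicalClosure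
        = ⊤)
    (B : H →L[ℂ] H) (hB : IsPositive (B ∘L adjoint B - adjoint B ∘L B))
    (X : H →L[ℂ] H) (hT : A ∘L X - X ∘L B ∈ HSsub b) :
    hsNormSq b (adjoint A ∘L X - X ∘L adjoint B) ≤ hsNormSq b (A ∘L X - X ∘L B) := by
  let z : ℕ → HSsub b := fun n => ⟨(kry A x n).starProjection ∘L X, hs_cut b _ X⟩
  have hz : ∀ h, Tendsto (fun n => (z n : H →L[ℂ] H) h) atTop (𝓝 (X h)) := by
    intro h
    refine Submodule.starProjection_tendsto_self (kry A x) (kry_mono A x) (X h) ?_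
    rw [← hx]
    refine Submodule.topologicalClosure_mono (Submodule.span_le.2 ?_)
    rintro _ ⟨j, p, rfl⟩
    exact Submodule.mem_iSup_of_mem (p + 1) (kry_mem A x (Nat.lt_succ_self p) j)
  let M : ℝ := ‖toL b ⟨_, hT⟩‖ + 2 * NNReal.sqrt (‖X‖₊ ^ 2 * (m * (2 * ‖A‖₊) ^ 2))
  have hM : ∀ n, ‖derL b A B (z n)‖ ≤ M := by
    intro n
    have : FiniteDimensional ℂ (Submodule.span ℂ (Set.range fun j : Fin m =>
      (A ^ n) (x j) - (kry A x n).starProjection ((A ^ n) (x j)))) :=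
      FiniteDimensional.span_of_finite ℂ (Set.finite_range _)
    refine derL_bound b m (kry A x n) _ ?_ A B X hA (kry_step A x n) hT
    exact (finrank_range_le_card _).trans (by simp)
  obtain ⟨w, hw, hcau⟩ := komlos (K := lp (fun _ : ι => H) 2)
    (fun u v => by have := parallelogram_law_with_norm ℂ u v; nlinarith)
    (fun k => derL b A B '' convexHull ℝ (z '' Set.Ici k))
    (fun k => (convex_convexHull ℝ _).linear_image _)
    (fun k => ⟨_, _, subset_convexHull ℝ _ ⟨k, Set.self_mem_Ici, rfl⟩, rfl⟩)
    (fun k l hkl => Set.image_mono (convexHull_mono (Set.image_mono (Set.Ici_subset_Ici.2 hkl))))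
    M (by
      rintro _ ⟨Y, hY, rfl⟩
      have hc : Convex ℝ ((derL b A B) ⁻¹' Metric.closedBall 0 M) :=
        (convex_closedBall 0 M).linear_preimage _
      have := convexHull_min (t := (derL b A B) ⁻¹' Metric.closedBall 0 M)
        (by rintro _ ⟨k, -, rfl⟩; simpa using hM k) hc hY
      simpa using this)
  choose Z hZ hZw using hw
  have hlim := tail_conv b X z hz Z hZ
  obtain ⟨w', hw'⟩ := cauchySeq_tendsto_of_complete hcau
  have hw'T : w' = toL b ⟨_, hT⟩ := by
    ext i
    have h1 : Tendsto (fun k => w k i) atTop (𝓝 (w' i)) := by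
      rw [tendsto_iff_norm_sub_tendsto_zero] at hw' ⊢
      refine squeeze_zero (fun _ => norm_nonneg _) (fun k => ?_) hw'
      exact lp.norm_apply_le_norm two_ne_zero (w k - w') i
    have h2 : Tendsto (fun k => w k i) atTop (𝓝 (A (X (b i)) - X (B (b i)))) := by
      simp only [← hZw, derL_apply]
      exact ((A.continuous.tendsto _).comp (hlim (b i))).sub (hlim _)
    exact tendsto_nhds_unique h1 h2
  have hRHS := hs_eq_norm b ⟨_, hT⟩
  rw [← hw'T] at hRHS
  have hlimN : Tendsto (fun k => (‖w k‖₊ : ℝ≥0∞) ^ 2) atTop (𝓝 ((‖w'‖₊ : ℝ≥0∞) ^ 2)) := by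
    have : Tendsto (fun k => ‖w k‖₊ ^ 2) atTop (𝓝 (‖w'‖₊ ^ 2)) := hw'.nnnorm.pow 2
    exact_mod_cast ENNReal.tendsto_coe.2 this
  refine le_trans ?_ hRHS.ge
  conv_lhs => unfold hsNormSq
  rw [ENNReal.tsum_eq_iSup_sum]
  refine iSup_le fun s => ?_
  have hlimS : Tendsto (fun k => ∑ i ∈ s, (‖(adjoint A ∘L (Z k : H →L[ℂ] H)
      - (Z k : H →L[ℂ] H) ∘L adjoint B) (b i)‖₊ : ℝ≥0∞) ^ 2) atTop
      (𝓝 (∑ i ∈ s, (‖(adjoint A ∘L X - X ∘L adjoint B) (b i)‖₊ : ℝ≥0∞) ^ 2)) := by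
    refine tendsto_finsetSum _ fun i _ => ?_
    have h2 : Tendsto (fun k => (adjoint A ∘L (Z k : H →L[ℂ] H)
      - (Z k : H →L[ℂ] H) ∘L adjoint B) (b i)) atTop
        (𝓝 ((adjoint A ∘L X - X ∘L adjoint B) (b i))) :=
      (((adjoint A).continuous.tendsto _).comp (hlim (b i))).sub (hlim _)
    exact_mod_cast ENNReal.tendsto_coe.2 (h2.nnnorm.pow 2)
  refine le_of_tendsto_of_tendsto' hlimS hlimN fun k => ?_
  refine (ENNReal.sum_le_tsum s).trans ?_
  refine (berberian b A hA B hB (Z k) (Z k).2).trans ?_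
  rw [← hZw]
  exact (hs_eq_norm b (adHS b A B (Z k))).le

end aux

/-- If `A` is a hyponormal operator of finite multiplicity and `B*` is hyponormal, then
`‖A*X - XB*‖₂ ≤ ‖AX - XB‖₂` for every bounded operator `X` (with the convention that the
Hilbert–Schmidt norm of a non-Hilbert–Schmidt operator is `∞`). -/
theorem hsNormSq_adjoint_le_of_hyponormal
    {H : Type*} [NormedAddCommGroup H] [InnerProductSpace ℂ H] [CompleteSpace H]
    {ι : Type*} (b : HilbertBasis ι ℂ H)
    (A : H →L[ℂ] H) (hA : IsPositive (adjoint A ∘L A - A ∘L adjoint A))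
    (hmult : ∃ (m : ℕ) (x : Fin m → H),
      (Submodule.span ℂ {v : H | ∃ (j : Fin m) (p : ℕ), v = (A ^ p) (x j)}).topologicalClosure
        = ⊤)
    (B : H →L[ℂ] H) (hB : IsPositive (B ∘L adjoint B - adjoint B ∘L B))
    (X : H →L[ℂ] H) :
    hsNormSq b (adjoint A ∘L X - X ∘L adjoint B) ≤ hsNormSq b (A ∘L X - X ∘L B) := by
  obtain ⟨m, x, hx⟩ := hmult
  by_cases hT : A ∘L X - X ∘L B ∈ HSsub b
  · exact main_aux b A hA x hx B hB X hT
  · rw [mem_HS, not_not] at hT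
    rw [hT]
    exact le_top
end

section
/- Let (Ω, d) be a separable metric space equipped with a finite Borel measure μ, let p > 0, and suppose the p-dimensional Hausdorff measure m_p(Ω) is finite. Let H be a complex Hilbert space, C ≥ 0, and let T : L²(Ω, μ) → H be a bounded linear operator such that ‖T ∘ P(α)‖² ≤ C (diam α)^p for every Borel set α ⊆ Ω, where P(α) denotes the operator of multiplication by the indicator function of α on L²(Ω, μ). Then T is a Hilbert–Schmidt operator and ‖T‖₂² ≤ C · m_p(Ω). -/
open MeasureTheory ContinuousLinearMap
open scoped ENNReal NNReal

lemma aux1 {Ω : Type*} [MeasurableSpace Ω] (ν : Measure Ω) [IsFiniteMeasure ν] (g : Ω → ℂ)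
    (hg : MemLp g 2 ν) (c : ℂ) :
    ∫⁻ ω, ‖g ω‖ₑ ^ 2 ∂ν ≤ ∫⁻ ω, ‖g ω - c‖ₑ ^ 2 ∂ν + ‖∫ ω, g ω ∂ν‖ₑ ^ 2 / ν Set.univ := by
  by_cases h0 : ν = 0
  · simp [h0]
  have hi : Integrable g ν := hg.integrable (by norm_num)
  have hgc : MemLp (fun ω => g ω - c) 2 ν := hg.sub (memLp_const c)
  have hsq : Integrable (fun ω => ‖g ω‖ ^ 2) ν := hg.integrable_norm_pow (by norm_num)
  have hsq2 : Integrable (fun ω => ‖g ω - c‖ ^ 2) ν := hgc.integrable_norm_pow (by norm_num)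
  have e1 : ∀ f : Ω → ℂ, Integrable (fun ω => ‖f ω‖ ^ 2) ν →
      ∫⁻ ω, ‖f ω‖ₑ ^ 2 ∂ν = ENNReal.ofReal (∫ ω, ‖f ω‖ ^ 2 ∂ν) := by
    intro f hf
    rw [ofReal_integral_eq_lintegral_ofReal hf (Filter.Eventually.of_forall fun _ => by positivity)]
    refine lintegral_congr fun ω => ?_
    rw [ENNReal.ofReal_pow (norm_nonneg _), ofReal_norm]
  rw [e1 g hsq, e1 _ hsq2]
  have hm : 0 < ν.real Set.univ := by
    rw [measureReal_def]
    exact ENNReal.toReal_pos (by simpa using h0) (measure_ne_top _ _)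
  have e2 : ‖∫ ω, g ω ∂ν‖ₑ ^ 2 / ν Set.univ
      = ENNReal.ofReal (‖∫ ω, g ω ∂ν‖ ^ 2 / ν.real Set.univ) := by
    rw [ENNReal.ofReal_div_of_pos hm, ENNReal.ofReal_pow (norm_nonneg _), ofReal_norm,
      ofReal_measureReal]
  rw [e2, ← ENNReal.ofReal_add (by positivity) (by positivity)]
  apply ENNReal.ofReal_le_ofReal
  set m := ν.real Set.univ
  have hin : Integrable (fun ω => (starRingEnd ℂ c * g ω).re) ν :=
    (hi.const_mul _).re
  have e3 : ∫ ω, ‖g ω - c‖ ^ 2 ∂ν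
      = ∫ ω, ‖g ω‖ ^ 2 ∂ν - 2 * (starRingEnd ℂ c * ∫ ω, g ω ∂ν).re + m * ‖c‖ ^ 2 := by
    have : ∀ ω, ‖g ω - c‖ ^ 2 = ‖g ω‖ ^ 2 - 2 * (starRingEnd ℂ c * g ω).re + ‖c‖ ^ 2 := by
      intro ω
      simp only [← Complex.normSq_eq_norm_sq, Complex.normSq_apply]
      simp
      ring
    simp_rw [this]
    rw [integral_add (f := fun ω => ‖g ω‖ ^ 2 - 2 * (starRingEnd ℂ c * g ω).re)
        (hsq.sub (hin.const_mul 2)) (integrable_const _),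
      integral_sub hsq (hin.const_mul 2), integral_const_mul, integral_const]
    have : ∫ ω, (starRingEnd ℂ c * g ω).re ∂ν = (starRingEnd ℂ c * ∫ ω, g ω ∂ν).re := by
      rw [← integral_const_mul]
      exact integral_re (hi.const_mul _)
    rw [this]; simp [m]
  rw [e3]
  have h4 : (starRingEnd ℂ c * ∫ ω, g ω ∂ν).re ≤ ‖c‖ * ‖∫ ω, g ω ∂ν‖ := by
    refine (Complex.re_le_norm _).trans ?_
    simp
  set I := ‖∫ ω, g ω ∂ν‖
  have h5 : 2 * (‖c‖ * I) ≤ m * ‖c‖ ^ 2 + I ^ 2 / m := by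
    have : m * ‖c‖ ^ 2 + I ^ 2 / m - 2 * (‖c‖ * I) = (m * ‖c‖ - I) ^ 2 / m := by
      field_simp; ring
    have : 0 ≤ (m * ‖c‖ - I) ^ 2 / m := by positivity
    linarith
  linarith

lemma aux2 {Ω : Type*} [MeasurableSpace Ω] (μ : Measure Ω) [IsFiniteMeasure μ] (g : Ω → ℂ)
    (hg : MemLp g 2 μ) (c : ℕ → ℂ) (N : Ω → ℕ) (hN : Measurable N) :
    ∫⁻ ω, ‖g ω‖ₑ ^ 2 ∂μ ≤ ∫⁻ ω, ‖g ω - c (N ω)‖ₑ ^ 2 ∂μ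
      + ∑' j, ‖∫ ω in N ⁻¹' {j}, g ω ∂μ‖ₑ ^ 2 / μ (N ⁻¹' {j}) := by
  have hm : ∀ j, MeasurableSet (N ⁻¹' {j}) := fun j => hN (measurableSet_singleton j)
  have hd : Pairwise (Function.onFun Disjoint fun j => N ⁻¹' {j}) := by
    intro i j hij
    exact Disjoint.preimage _ (by simpa using hij)
  have hu : (⋃ j, N ⁻¹' {j}) = Set.univ := by ext; simp
  have key : ∀ F : Ω → ℝ≥0∞, ∫⁻ ω, F ω ∂μ = ∑' j, ∫⁻ ω in N ⁻¹' {j}, F ω ∂μ := by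
    intro F
    rw [← lintegral_iUnion hm hd, hu, Measure.restrict_univ]
  rw [key, key (fun ω => ‖g ω - c (N ω)‖ₑ ^ 2), ← ENNReal.tsum_add]
  refine ENNReal.tsum_le_tsum fun j => ?_
  refine (aux1 (μ.restrict (N ⁻¹' {j})) g (hg.restrict _) (c j)).trans ?_
  simp only [Measure.restrict_apply_univ]
  gcongr ?_ + _
  refine le_of_eq (setLIntegral_congr_fun (hm j) ?_)
  intro ω hω
  simp only [Set.mem_preimage, Set.mem_singleton_iff] at hω
  simp [hω]

lemma aux4 {Ω : Type*} [MetricSpace Ω] [MeasurableSpace Ω] [BorelSpace Ω] (p : ℝ) (hp : 0 < p)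
    (hΩ : Measure.hausdorffMeasure p (Set.univ : Set Ω) < ⊤) (r ε : ℝ≥0∞) (hr : 0 < r)
    (hε : 0 < ε) :
    ∃ N : Ω → ℕ, Measurable N ∧ (∀ j, Metric.ediam (N ⁻¹' {j}) ≤ r) ∧
      ∑' j, Metric.ediam (N ⁻¹' {j}) ^ p ≤ Measure.hausdorffMeasure p (Set.univ : Set Ω) + ε := by
  have h1 := Measure.hausdorffMeasure_apply p (Set.univ : Set Ω)
  have h2 : (⨅ (t : ℕ → Set Ω) (_ : Set.univ ⊆ ⋃ n, t n) (_ : ∀ n, Metric.ediam (t n) ≤ r),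
      ∑' n, ⨆ _ : (t n).Nonempty, Metric.ediam (t n) ^ p)
      < Measure.hausdorffMeasure p (Set.univ : Set Ω) + ε := by
    refine lt_of_le_of_lt ?_ (ENNReal.lt_add_right hΩ.ne hε.ne')
    rw [h1]
    exact le_iSup₂_of_le r hr le_rfl
  simp only [iInf_lt_iff] at h2
  obtain ⟨t, ht, hd, hs⟩ := h2
  classical
  have hex : ∀ ω, ∃ j, ω ∈ closure (t j) := fun ω => by
    obtain ⟨j, hj⟩ := Set.mem_iUnion.1 (ht (Set.mem_univ ω))
    exact ⟨j, subset_closure hj⟩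
  have hsub : ∀ j, (fun ω => Nat.find (hex ω)) ⁻¹' {j} ⊆ closure (t j) := by
    intro j ω hω
    simp only [Set.mem_preimage, Set.mem_singleton_iff] at hω
    rw [← hω]
    exact Nat.find_spec (hex ω)
  have hdj : ∀ j, Metric.ediam ((fun ω => Nat.find (hex ω)) ⁻¹' {j}) ≤ Metric.ediam (t j) :=
    fun j => (Metric.ediam_mono (hsub j)).trans (Metric.ediam_closure _).le
  refine ⟨fun ω => Nat.find (hex ω), measurable_find hex fun j => isClosed_closure.measurableSet,
    fun j => (hdj j).trans (hd j), ?_⟩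
  refine le_trans (ENNReal.tsum_le_tsum fun j => ?_) hs.le
  by_cases hne : (t j).Nonempty
  · simp only [hne, iSup_pos]
    exact ENNReal.rpow_le_rpow (hdj j) hp.le
  · have := hdj j
    rw [Set.not_nonempty_iff_eq_empty.1 hne, Metric.ediam_empty, nonpos_iff_eq_zero] at this
    rw [this, ENNReal.zero_rpow_of_pos hp]
    exact zero_le

lemma aux5 {Ω : Type*} [MetricSpace Ω] [MeasurableSpace Ω] [BorelSpace Ω]
    (μ : Measure Ω) [IsFiniteMeasure μ] (p : ℝ) (hp : 0 < p)
    {H : Type*} [NormedAddCommGroup H] [InnerProductSpace ℂ H]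
    (C : ℝ) (hC : 0 ≤ C)
    (T : Lp ℂ 2 μ →L[ℂ] H)
    (P : Set Ω → (Lp ℂ 2 μ →L[ℂ] Lp ℂ 2 μ))
    (hP : ∀ α : Set Ω, MeasurableSet α → ∀ f : Lp ℂ 2 μ,
      ⇑(P α f) =ᵐ[μ] fun ω => α.indicator (fun _ => (1 : ℂ)) ω * f ω)
    (hTP : ∀ α : Set Ω, MeasurableSet α → ‖T ∘L P α‖ ^ 2 ≤ C * Metric.diam α ^ p)
    {κ : Type*} [Fintype κ] (f : κ → H) (hf : Orthonormal ℂ f) (g : κ → Lp ℂ 2 μ)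
    (hg : ∀ k u, inner ℂ (g k) u = inner ℂ (f k) (T u)) (α : Set Ω) (hα : MeasurableSet α)
    (hd : Metric.ediam α ≠ ⊤) :
    ∑ k, ‖∫ ω in α, g k ω ∂μ‖ₑ ^ 2 / μ α ≤ ENNReal.ofReal C * Metric.ediam α ^ p := by
  by_cases h0 : μ α = 0
  · simp [Measure.restrict_eq_zero.2 h0]
  have hm : 0 < μ.real α := ENNReal.toReal_pos h0 (measure_ne_top _ _)
  set u : Lp ℂ 2 μ := indicatorConstLp 2 hα (measure_ne_top μ α) (1 : ℂ) with hu
  have hnu : ‖u‖ ^ 2 = μ.real α := by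
    rw [hu, norm_indicatorConstLp (by norm_num) (by norm_num)]
    simp only [norm_one, one_mul, ENNReal.toReal_ofNat]
    rw [← Real.sqrt_eq_rpow, Real.sq_sqrt hm.le]
  have hPu : P α u = u := by
    apply Lp.ext
    filter_upwards [hP α hα u, indicatorConstLp_coeFn (p := 2) (hs := hα)
      (hμs := measure_ne_top μ α) (c := (1 : ℂ))] with ω h1 h2
    rw [h1, h2]
    by_cases hω : ω ∈ α <;> simp [hω]
  have hint : ∀ k, ‖∫ ω in α, g k ω ∂μ‖ = ‖inner ℂ (f k) (T u)‖ := by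
    intro k
    rw [← hg, ← L2.inner_indicatorConstLp_one (𝕜 := ℂ) hα (measure_ne_top μ α), norm_inner_symm]
  have hb : ∑ k, ‖∫ ω in α, g k ω ∂μ‖ ^ 2 ≤ ‖T u‖ ^ 2 := by
    simp_rw [hint]
    exact hf.sum_inner_products_le (T u)
  have hT : ‖T u‖ ^ 2 ≤ C * Metric.diam α ^ p * μ.real α := by
    rw [← hnu]
    have : ‖T u‖ ≤ ‖T ∘L P α‖ * ‖u‖ := by
      conv_lhs => rw [← hPu]
      exact (T ∘L P α).le_opNorm u
    calc ‖T u‖ ^ 2 ≤ (‖T ∘L P α‖ * ‖u‖) ^ 2 := by gcongr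
      _ = ‖T ∘L P α‖ ^ 2 * ‖u‖ ^ 2 := by ring
      _ ≤ _ := by gcongr; exact hTP α hα
  have e : ∀ k, ‖∫ ω in α, g k ω ∂μ‖ₑ ^ 2 / μ α
      = ENNReal.ofReal (‖∫ ω in α, g k ω ∂μ‖ ^ 2 / μ.real α) := by
    intro k
    rw [ENNReal.ofReal_div_of_pos hm, ENNReal.ofReal_pow (norm_nonneg _), ofReal_norm,
      ofReal_measureReal]
  simp_rw [e]
  rw [← ENNReal.ofReal_sum_of_nonneg (fun _ _ => by positivity), ← ENNReal.ofReal_toReal hd,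
    ENNReal.ofReal_rpow_of_nonneg ENNReal.toReal_nonneg hp.le, ← ENNReal.ofReal_mul hC]
  apply ENNReal.ofReal_le_ofReal
  rw [← Finset.sum_div, div_le_iff₀ hm]
  exact hb.trans hT

lemma aux3 {Ω : Type*} [MetricSpace Ω] [SecondCountableTopology Ω] [MeasurableSpace Ω]
    [BorelSpace Ω] (μ : Measure Ω) [IsFiniteMeasure μ] (g : Ω → ℂ) (hg : MemLp g 2 μ)
    (N : ℕ → Ω → ℕ) (hN : ∀ n, Measurable (N n))
    (hd : ∀ n j, Metric.ediam (N n ⁻¹' {j}) ≤ ((n : ℝ≥0∞) + 1)⁻¹) (ε : ℝ≥0∞) (hε : ε ≠ 0) :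
    ∃ c : ℕ → ℕ → ℂ, ∀ᶠ n in Filter.atTop, ∫⁻ ω, ‖g ω - c n (N n ω)‖ₑ ^ 2 ∂μ ≤ ε := by
  rcases isEmpty_or_nonempty Ω with hE | hE
  · exact ⟨0, Filter.Eventually.of_forall fun n => by simp⟩
  set δ : ℝ≥0∞ := min 1 (ε / 8) with hδ
  have hδ0 : δ ≠ 0 := by
    have : 0 < δ := lt_min (by simp) (ENNReal.div_pos hε (by simp))
    exact this.ne'
  have hδ1 : δ ≤ 1 := min_le_left _ _
  have hδ8 : 8 * δ ≤ ε := by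
    calc 8 * δ ≤ 8 * (ε / 8) := by gcongr; exact min_le_right _ _
      _ = ε := ENNReal.mul_div_cancel (by simp) (by simp)
  obtain ⟨f, hf, -⟩ := hg.exists_boundedContinuous_eLpNorm_sub_le (by simp) hδ0
  have hf2 : ∫⁻ ω, ‖g ω - f ω‖ₑ ^ 2 ∂μ ≤ δ := by
    have h := eLpNorm_nnreal_pow_eq_lintegral (f := g - (f : Ω → ℂ)) (μ := μ) (p := 2) (by simp)
    have h' : ∫⁻ ω, ‖g ω - f ω‖ₑ ^ 2 ∂μ = eLpNorm (g - (f : Ω → ℂ)) 2 μ ^ 2 := by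
      simpa using h.symm
    rw [h']
    calc _ ≤ δ ^ 2 := by gcongr
      _ = δ * δ := sq δ
      _ ≤ δ * 1 := by gcongr
      _ = δ := mul_one δ
  refine ⟨fun n j => f (Function.invFun (N n) j), ?_⟩
  have hx : ∀ n ω, edist (Function.invFun (N n) (N n ω)) ω ≤ ((n : ℝ≥0∞) + 1)⁻¹ := by
    intro n ω
    refine (Metric.edist_le_ediam_of_mem (s := N n ⁻¹' {N n ω}) ?_ ?_).trans (hd n _)
    · exact Function.invFun_eq (f := N n) ⟨ω, rfl⟩
    · simp
  have hlim0 : Filter.Tendsto (fun n : ℕ => ((n : ℝ≥0∞) + 1)⁻¹) Filter.atTop (nhds 0) := by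
    have := (Filter.tendsto_add_atTop_iff_nat 1).2 ENNReal.tendsto_inv_nat_nhds_zero
    simpa using this
  have hxt : ∀ ω, Filter.Tendsto (fun n => Function.invFun (N n) (N n ω)) Filter.atTop
      (nhds ω) := by
    intro ω
    rw [tendsto_iff_edist_tendsto_0]
    exact tendsto_of_tendsto_of_tendsto_of_le_of_le tendsto_const_nhds hlim0
      (fun _ => zero_le) (fun n => hx n ω)
  have hdc : Filter.Tendsto
      (fun n => ∫⁻ ω, ‖f ω - f (Function.invFun (N n) (N n ω))‖ₑ ^ 2 ∂μ) Filter.atTop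
      (nhds (∫⁻ _, 0 ∂μ)) := by
    refine tendsto_lintegral_of_dominated_convergence
      (fun _ => (ENNReal.ofReal (2 * ‖f‖)) ^ 2) ?_ ?_ ?_ ?_
    · intro n
      have h1 : Measurable fun ω => f (Function.invFun (N n) (N n ω)) :=
        (measurable_from_nat (f := fun j => f (Function.invFun (N n) j))).comp (hN n)
      exact ((f.continuous.measurable.sub h1).enorm).pow_const 2
    · intro n
      refine Filter.Eventually.of_forall fun ω => ?_
      dsimp only
      gcongr
      rw [← ofReal_norm]
      apply ENNReal.ofReal_le_ofReal
      rw [← dist_eq_norm]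
      exact f.dist_le_two_norm _ _
    · rw [lintegral_const]
      exact ENNReal.mul_ne_top (ENNReal.pow_ne_top ENNReal.ofReal_ne_top) (measure_ne_top _ _)
    · refine Filter.Eventually.of_forall fun ω => ?_
      have h1 : Filter.Tendsto (fun n => f ω - f (Function.invFun (N n) (N n ω))) Filter.atTop
          (nhds (f ω - f ω)) :=
        tendsto_const_nhds.sub ((f.continuous.tendsto ω).comp (hxt ω))
      have h2 := (ENNReal.continuous_pow 2).tendsto _ |>.comp h1.enorm
      simpa [Function.comp_def] using h2
  rw [lintegral_zero] at hdc
  have hev := hdc.eventually (gt_mem_nhds (pos_iff_ne_zero.2 hδ0))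
  filter_upwards [hev] with n hn
  have hpt : ∀ a b : ℝ≥0∞, (a + b) ^ 2 ≤ 4 * (a ^ 2 + b ^ 2) := by
    intro a b
    have h1 : ∀ x y : ℝ≥0∞, x ≤ y → (x + y) ^ 2 ≤ 4 * (x ^ 2 + y ^ 2) := by
      intro x y h
      calc (x + y) ^ 2 ≤ (y + y) ^ 2 := by gcongr
        _ = 4 * y ^ 2 := by ring
        _ ≤ _ := by gcongr; exact le_add_self
    rcases le_total a b with h | h
    · exact h1 a b h
    · rw [add_comm a b, add_comm (a ^ 2)]; exact h1 b a h
  have hAE : AEMeasurable (fun ω => ‖g ω - f ω‖ₑ ^ 2) μ :=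
    ((hg.aestronglyMeasurable.sub f.continuous.aestronglyMeasurable).enorm).pow_const 2
  calc ∫⁻ ω, ‖g ω - f (Function.invFun (N n) (N n ω))‖ₑ ^ 2 ∂μ
      ≤ ∫⁻ ω, 4 * (‖g ω - f ω‖ₑ ^ 2 + ‖f ω - f (Function.invFun (N n) (N n ω))‖ₑ ^ 2) ∂μ := by
        refine lintegral_mono fun ω => ?_
        refine le_trans ?_ (hpt _ _)
        gcongr
        refine le_trans (le_of_eq ?_) (enorm_add_le _ _)
        congr 1; ring
    _ = 4 * (∫⁻ ω, ‖g ω - f ω‖ₑ ^ 2 ∂μ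
        + ∫⁻ ω, ‖f ω - f (Function.invFun (N n) (N n ω))‖ₑ ^ 2 ∂μ) := by
        rw [lintegral_const_mul' _ _ (by simp), lintegral_add_left' hAE]
    _ ≤ 4 * (δ + δ) := by gcongr
    _ = 8 * δ := by ring
    _ ≤ ε := hδ8

/-- Let `(Ω, d)` be a separable metric space with a finite Borel measure `μ` and finite
`p`-dimensional Hausdorff measure. If `T : L²(Ω, μ) → H` satisfies
`‖T ∘ P(α)‖² ≤ C (diam α)^p` for every Borel set `α` (`P(α)` being multiplication by the
indicator of `α`), then `T` is Hilbert–Schmidt with `‖T‖₂² ≤ C ⬝ m_p(Ω)`. -/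
theorem hilbertSchmidt_of_diam_bound
    {Ω : Type*} [MetricSpace Ω] [SecondCountableTopology Ω]
    [MeasurableSpace Ω] [BorelSpace Ω]
    (μ : Measure Ω) [IsFiniteMeasure μ]
    (p : ℝ) (hp : 0 < p)
    (hΩ : Measure.hausdorffMeasure p (Set.univ : Set Ω) < ⊤)
    {H : Type*} [NormedAddCommGroup H] [InnerProductSpace ℂ H]
    (C : ℝ) (hC : 0 ≤ C)
    (T : Lp ℂ 2 μ →L[ℂ] H)
    (P : Set Ω → (Lp ℂ 2 μ →L[ℂ] Lp ℂ 2 μ))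
    (hP : ∀ α : Set Ω, MeasurableSet α → ∀ f : Lp ℂ 2 μ,
      ⇑(P α f) =ᵐ[μ] fun ω => α.indicator (fun _ => (1 : ℂ)) ω * f ω)
    (hTP : ∀ α : Set Ω, MeasurableSet α → ‖T ∘L P α‖ ^ 2 ≤ C * Metric.diam α ^ p)
    {ι : Type*} (b : HilbertBasis ι ℂ (Lp ℂ 2 μ)) :
    hsNormSq b T ≤
      ENNReal.ofReal C * Measure.hausdorffMeasure p (Set.univ : Set Ω) := by
  classical
  unfold hsNormSq
  rw [ENNReal.tsum_eq_iSup_sum]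
  refine iSup_le fun s => ?_
  -- orthonormal basis of the span of the images
  let V : Submodule ℂ H := Submodule.span ℂ ((s.image fun i => T (b i) : Finset H) : Set H)
  haveI : FiniteDimensional ℂ V := FiniteDimensional.span_finset ℂ _
  let e := stdOrthonormalBasis ℂ V
  let f : Fin (Module.finrank ℂ V) → H := fun k => (e k : H)
  have hf : Orthonormal ℂ f := e.orthonormal.comp_linearIsometry V.subtypeₗᵢ
  let g : Fin (Module.finrank ℂ V) → Lp ℂ 2 μ := fun k =>
    (InnerProductSpace.toDual ℂ (Lp ℂ 2 μ)).symm ((innerSL ℂ (f k)) ∘L T)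
  have hg : ∀ k u, inner ℂ (g k) u = inner ℂ (f k) (T u) := by
    intro k u
    simp [g]
  have hbound : ∑ i ∈ s, (‖T (b i)‖₊ : ℝ≥0∞) ^ 2 ≤ ∑ k, ∫⁻ ω, ‖g k ω‖ₑ ^ 2 ∂μ := by
    have h1 : ∀ i ∈ s, ‖T (b i)‖ ^ 2 = ∑ k, ‖inner ℂ (g k) (b i)‖ ^ 2 := by
      intro i hi
      have hmem : T (b i) ∈ V := Submodule.subset_span (by
        simpa using ⟨i, hi, rfl⟩)
      have := e.sum_sq_norm_inner_right (⟨T (b i), hmem⟩ : V)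
      simp only [hg]
      exact this.symm
    have h2 : ∑ i ∈ s, ‖T (b i)‖ ^ 2 ≤ ∑ k, ‖g k‖ ^ 2 := by
      rw [Finset.sum_congr rfl h1, Finset.sum_comm]
      refine Finset.sum_le_sum fun k _ => ?_
      simp_rw [norm_inner_symm (g k)]
      exact b.orthonormal.sum_inner_products_le (g k)
    have h3 : ∀ k, ∫⁻ ω, ‖g k ω‖ₑ ^ 2 ∂μ = ENNReal.ofReal (‖g k‖ ^ 2) := by
      intro k
      have h := eLpNorm_nnreal_pow_eq_lintegral (f := (g k : Ω → ℂ)) (μ := μ) (p := 2) (by simp)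
      have h' : ∫⁻ ω, ‖g k ω‖ₑ ^ 2 ∂μ = eLpNorm (g k : Ω → ℂ) 2 μ ^ 2 := by
        simpa using h.symm
      rw [h', ENNReal.ofReal_pow (norm_nonneg _), ofReal_norm, Lp.enorm_def]
    simp_rw [h3]
    rw [← ENNReal.ofReal_sum_of_nonneg (fun _ _ => by positivity)]
    refine le_trans (le_of_eq ?_) (ENNReal.ofReal_le_ofReal h2)
    rw [ENNReal.ofReal_sum_of_nonneg (fun _ _ => by positivity)]
    refine Finset.sum_congr rfl fun i _ => ?_
    rw [ENNReal.ofReal_pow (norm_nonneg _), ofReal_norm]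
    rfl
  refine hbound.trans ?_
  have hpos : ∀ n : ℕ, 0 < ((n : ℝ≥0∞) + 1)⁻¹ := fun n =>
    ENNReal.inv_pos.2 (by finiteness)
  choose N hN hd hs using fun n : ℕ => aux4 (Ω := Ω) p hp hΩ _ _ (hpos n) (hpos n)
  have hlim0 : Filter.Tendsto (fun n : ℕ => ((n : ℝ≥0∞) + 1)⁻¹) Filter.atTop (nhds 0) := by
    have := (Filter.tendsto_add_atTop_iff_nat 1).2 ENNReal.tendsto_inv_nat_nhds_zero
    simpa using this
  set M := Measure.hausdorffMeasure p (Set.univ : Set Ω) with hM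
  set K : ℝ≥0∞ := (Module.finrank ℂ V : ℝ≥0∞) with hK
  have hfin : ∀ ε : ℝ≥0∞, ε ≠ 0 →
      ∑ k, ∫⁻ ω, ‖g k ω‖ₑ ^ 2 ∂μ ≤ K * ε + ENNReal.ofReal C * (M + ε) := by
    intro ε hε
    choose c hc using fun k => aux3 μ (g k) (Lp.memLp (g k)) N hN hd ε hε
    have hev := (Filter.eventually_all.2 hc).and
      (hlim0.eventually (gt_mem_nhds (pos_iff_ne_zero.2 hε)))
    obtain ⟨n, hn1, hn2⟩ := hev.exists
    calc ∑ k, ∫⁻ ω, ‖g k ω‖ₑ ^ 2 ∂μ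
        ≤ ∑ k, (ε + ∑' j, ‖∫ ω in N n ⁻¹' {j}, g k ω ∂μ‖ₑ ^ 2 / μ (N n ⁻¹' {j})) := by
          refine Finset.sum_le_sum fun k _ => ?_
          refine (aux2 μ (g k) (Lp.memLp (g k)) (c k n) (N n) (hN n)).trans ?_
          gcongr
          exact hn1 k
      _ = K * ε + ∑' j, ∑ k, ‖∫ ω in N n ⁻¹' {j}, g k ω ∂μ‖ₑ ^ 2 / μ (N n ⁻¹' {j}) := by
          rw [Finset.sum_add_distrib, Summable.tsum_finsetSum (fun _ _ => ENNReal.summable)]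
          simp [hK]
      _ ≤ K * ε + ∑' j, ENNReal.ofReal C * Metric.ediam (N n ⁻¹' {j}) ^ p := by
          gcongr with j
          refine aux5 μ p hp C hC T P hP hTP f hf g hg _ (hN n (measurableSet_singleton j)) ?_
          refine ne_top_of_le_ne_top ?_ (hd n j)
          simp
      _ = K * ε + ENNReal.ofReal C * ∑' j, Metric.ediam (N n ⁻¹' {j}) ^ p := by
          rw [ENNReal.tsum_mul_left]
      _ ≤ K * ε + ENNReal.ofReal C * (M + ε) := by
          gcongr
          exact (hs n).trans (by gcongr)
  have hT : Filter.Tendsto (fun n : ℕ => K * ((n : ℝ≥0∞) + 1)⁻¹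
      + ENNReal.ofReal C * (M + ((n : ℝ≥0∞) + 1)⁻¹)) Filter.atTop
      (nhds (K * 0 + ENNReal.ofReal C * (M + 0))) := by
    refine Filter.Tendsto.add ?_ ?_
    · exact ENNReal.Tendsto.const_mul hlim0 (Or.inr (by simp [hK]))
    · exact ENNReal.Tendsto.const_mul (tendsto_const_nhds.add hlim0) (Or.inr (by simp))
  have := ge_of_tendsto' hT fun n => hfin _ (hpos n).ne'
  simpa using this
end

section
/- Let (X, μ) and (Y, ν) be standard Borel spaces with σ-finite measures, K a countable index set, and let a_k : X → ℂ, b_k : Y → ℂ be bounded measurable functions with Σ_k (sup_x |a_k(x)|)² < ∞ and Σ_k (sup_y |b_k(y)|)² < ∞. Define Δ : B(L²(X,μ), L²(Y,ν)) → B(L²(X,μ), L²(Y,ν)) by Δ(T) = Σ_{k∈K} M_{b_k} T M_{a_k} (the series converges in operator norm), where M_f denotes multiplication by f. Assume there is a set D ⊆ ℓ²(K) of finite two-dimensional Hausdorff measure such that (a_k(x))_{k∈K} ∈ D for μ-almost every x ∈ X (the left coefficient family has essential dimension at most 2). Then for every T ∈ B(L²(X,μ), L²(Y,ν)): lim_{n→∞}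 ‖Δⁿ(T)‖^{1/n} = 0 if and only if Δ(T) = 0. (That is, the 0-spectral subspace ℰ_Δ(0) coincides with ker Δ.) -/
open MeasureTheory Filter ContinuousLinearMap
open scoped ENNReal NNReal

section partA
variable {E : Type*} [NormedAddCommGroup E] [InnerProductSpace ℂ E] [CompleteSpace E]

lemma aux_normal_norm (N : E →L[ℂ] E) (hN : Commute N (adjoint N)) (e : E) :
    ‖adjoint N e‖ = ‖N e‖ := by
  have h1 : inner ℂ (adjoint N e) (adjoint N e) = inner ℂ (N e) (N e) := by
    rw [adjoint_inner_left, ← adjoint_inner_right N]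
    have := congrArg (fun A : E →L[ℂ] E => A e) hN.eq
    simp only [mul_apply_eq_comp] at this
    rw [this]
  rw [inner_self_eq_norm_sq_to_K, inner_self_eq_norm_sq_to_K] at h1
  have h2 : ‖adjoint N e‖ ^ 2 = ‖N e‖ ^ 2 := by exact_mod_cast h1
  exact (sq_eq_sq₀ (norm_nonneg _) (norm_nonneg _)).1 h2

/-- growth of a normal operator on a vector controls its norm there -/
lemma aux_normal_growth (N : E →L[ℂ] E) (hN : Commute N (adjoint N)) (e : E) (c ρ : ℝ)
    (hρ : 0 < ρ) (h : ∀ n : ℕ, ‖(N ^ n) e‖ ≤ c * ρ ^ n) : ‖N e‖ ≤ ρ * ‖e‖ := by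
  by_contra hcon
  push Not at hcon
  have he : 0 < ‖e‖ := by
    rcases (norm_nonneg e).lt_or_eq with h0 | h0
    · exact h0
    · have : e = 0 := norm_eq_zero.1 h0.symm
      simp [this] at hcon
  set q := ‖N e‖ / ‖e‖ with hq
  have hqρ : ρ < q := by rw [hq, lt_div_iff₀ he]; exact hcon
  have hstep : ∀ v : E, ‖N v‖ ^ 2 ≤ ‖N (N v)‖ * ‖v‖ := by
    intro v
    have h1 : inner ℂ (N v) (N v) = inner ℂ (adjoint N (N v)) v := by
      rw [adjoint_inner_left]
    have h2 : ‖N v‖ ^ 2 = ‖inner ℂ (N v) (N v)‖ := by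
      rw [inner_self_eq_norm_sq_to_K]; simp
    rw [h2, h1]
    refine (norm_inner_le_norm _ _).trans ?_
    rw [aux_normal_norm N hN]
  have hind : ∀ n : ℕ, 0 < ‖(N ^ n) e‖ ∧ q * ‖(N ^ n) e‖ ≤ ‖(N ^ (n + 1)) e‖ := by
    intro n
    induction n with
    | zero => refine ⟨by simpa using he, ?_⟩; simp [hq]; field_simp; exact le_rfl
    | succ n ih =>
      obtain ⟨ih1, ih2⟩ := ih
      have hq0 : 0 < q := hρ.trans hqρ
      have hp : 0 < ‖(N ^ (n + 1)) e‖ := lt_of_lt_of_le (mul_pos hq0 ih1) ih2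
      refine ⟨hp, ?_⟩
      have hs := hstep ((N ^ n) e)
      have e1 : N ((N ^ n) e) = (N ^ (n + 1)) e := by rw [pow_succ']; rfl
      have e2 : N ((N ^ (n + 1)) e) = (N ^ (n + 1 + 1)) e := by rw [pow_succ' N (n + 1)]; rfl
      rw [e1, e2] at hs
      have : q * ‖(N ^ (n + 1)) e‖ * ‖(N ^ n) e‖ ≤ ‖(N ^ (n + 1 + 1)) e‖ * ‖(N ^ n) e‖ := by
        nlinarith
      exact le_of_mul_le_mul_right this ih1
  have hq0 : 0 < q := hρ.trans hqρ
  have hlow : ∀ n : ℕ, q ^ n * ‖e‖ ≤ ‖(N ^ n) e‖ := by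
    intro n
    induction n with
    | zero => simp
    | succ n ih =>
      refine le_trans ?_ (hind n).2
      rw [pow_succ']; nlinarith
  have hbd : ∀ n : ℕ, (q / ρ) ^ n ≤ c / ‖e‖ := by
    intro n
    rw [div_pow, div_le_div_iff₀ (by positivity) he]
    exact (hlow n).trans (h n)
  have := tendsto_pow_atTop_atTop_of_one_lt ((one_lt_div hρ).2 hqρ)
  obtain ⟨n, hn⟩ := (this.eventually_gt_atTop (c / ‖e‖)).exists
  exact absurd (hbd n) (not_le.2 hn)

lemma aux_weak (q s : ℕ → E) (C : ℝ) (hq : ∀ n, ‖q n‖ ≤ C) (hd : ∀ n, ‖q n - s n‖ ≤ C)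
    (h1 : ∀ l, Tendsto (fun n => inner ℂ (q l) (q n - s n)) atTop (nhds 0))
    (h2 : ∀ n, Tendsto (fun l => inner ℂ (q l) (s n)) atTop (nhds 0))
    (h : E) (c : ℂ) (hc : Tendsto (fun n => inner ℂ (q n) h) atTop (nhds c)) : c = 0 := by
  have hC : 0 ≤ C := (norm_nonneg _).trans (hq 0)
  set U : Ultrafilter ℕ := hyperfilter ℕ with hU
  have hUle : (U : Filter ℕ) ≤ atTop := by
    rw [← Nat.cofinite_eq_atTop]; exact hyperfilter_le_cofinite
  -- weak limit
  have hlim : ∀ v : E, ∃ y : ℂ, Tendsto (fun n => inner ℂ (q n) v) U (nhds y) := by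
    intro v
    have hcpt : IsCompact (Metric.closedBall (0 : ℂ) (C * ‖v‖)) := isCompact_closedBall _ _
    have hm : ∀ n, inner ℂ (q n) v ∈ Metric.closedBall (0 : ℂ) (C * ‖v‖) := by
      intro n
      rw [mem_closedBall_zero_iff]
      exact (norm_inner_le_norm _ _).trans (by gcongr; exact hq n)
    obtain ⟨y, -, hy⟩ := hcpt.ultrafilter_le_nhds (U.map fun n => inner ℂ (q n) v)
      (by
        rw [le_principal_iff]
        exact mem_map.2 (Filter.univ_mem' hm))
    exact ⟨y, hy⟩
  choose φ hφ using hlim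
  have hadd : ∀ v w, φ (v + w) = φ v + φ w := fun v w =>
    tendsto_nhds_unique (hφ (v + w)) (by simpa [inner_add_right] using (hφ v).add (hφ w))
  have hsmul : ∀ (r : ℂ) v, φ (r • v) = r • φ v := fun r v =>
    tendsto_nhds_unique (hφ (r • v)) (by simpa [inner_smul_right] using (hφ v).const_mul r)
  have hbd : ∀ v, ‖φ v‖ ≤ C * ‖v‖ := fun v =>
    le_of_tendsto (hφ v).norm (Filter.Eventually.of_forall fun n =>
      (norm_inner_le_norm _ _).trans (by gcongr; exact hq n))
  let Φ : E →L[ℂ] ℂ := LinearMap.mkContinuous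
    { toFun := φ, map_add' := hadd, map_smul' := hsmul } C hbd
  set k := (InnerProductSpace.toDual ℂ E).symm Φ with hk
  have hkφ : ∀ v, inner ℂ k v = φ v := fun v => by
    rw [hk, InnerProductSpace.toDual_symm_apply]; rfl
  have hks : ∀ n, inner ℂ k (s n) = 0 := fun n => by
    rw [hkφ]; exact tendsto_nhds_unique (hφ _) ((h2 n).mono_left hUle)
  let W : Submodule ℂ E :=
    { carrier := {v | Tendsto (fun n => inner ℂ v (q n - s n)) atTop (nhds 0)}
      add_mem' := by
        intro v w hv hw
        have := hv.add hw
        simpa only [Set.mem_ofPred_eq, inner_add_left, add_zero] using this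
      zero_mem' := by simp
      smul_mem' := by
        intro r v hv
        have := hv.const_mul ((starRingEnd ℂ) r)
        simpa only [Set.mem_ofPred_eq, inner_smul_left, mul_zero] using this }
  have hkW : k ∈ W.topologicalClosure := by
    rw [← Submodule.orthogonal_orthogonal_eq_closure, Submodule.mem_orthogonal']
    intro v hv
    rw [hkφ]
    refine tendsto_nhds_unique (hφ v) ?_
    have : ∀ n, inner ℂ (q n) v = 0 := fun n => (Submodule.mem_orthogonal _ _).1 hv _ (h1 n)
    simp [this]
  have hkd : Tendsto (fun n => inner ℂ k (q n - s n)) atTop (nhds 0) := by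
    rw [Metric.tendsto_atTop]
    intro ε hε
    obtain ⟨v, hvW, hv⟩ := Metric.mem_closure_iff.1 hkW (ε / (2 * (C + 1))) (by positivity)
    obtain ⟨n0, hn0⟩ := (Metric.tendsto_atTop.1 (show Tendsto (fun n => inner ℂ v (q n - s n)) atTop (nhds 0) from hvW)) (ε / 2) (by positivity)
    refine ⟨n0, fun n hn => ?_⟩
    have h3 := hn0 n hn
    rw [dist_zero_right] at h3 ⊢
    have h4 : inner ℂ k (q n - s n) = inner ℂ (k - v) (q n - s n) + inner ℂ v (q n - s n) := by
      rw [← inner_add_left, sub_add_cancel]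
    have h5 : ‖inner ℂ (k - v) (q n - s n)‖ ≤ ε / 2 := by
      refine (norm_inner_le_norm _ _).trans ?_
      rw [dist_eq_norm] at hv
      calc ‖k - v‖ * ‖q n - s n‖ ≤ (ε / (2 * (C + 1))) * (C + 1) := by
            gcongr
            exact (hd n).trans (by linarith)
        _ = ε / 2 := by field_simp
    rw [h4]
    linarith [norm_add_le (inner ℂ (k - v) (q n - s n)) (inner ℂ v (q n - s n))]
  have hkq : Tendsto (fun n => inner ℂ (q n) k) atTop (nhds 0) := by
    have h6 : ∀ n, inner ℂ k (q n - s n) = inner ℂ k (q n) := fun n => by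
      rw [inner_sub_right, hks, sub_zero]
    simp only [h6] at hkd
    have := (Complex.continuous_conj.tendsto _).comp hkd
    simpa [Function.comp_def] using this
  have hk0 : k = 0 := by
    have : inner ℂ k k = 0 := by
      rw [hkφ]; exact tendsto_nhds_unique (hφ k) (hkq.mono_left hUle)
    exact inner_self_eq_zero.1 this
  have := hφ h
  rw [← hkφ, hk0, inner_zero_left] at this
  exact tendsto_nhds_unique (hc.mono_left hUle) this

lemma aux_growth {E : Type*} [NormedAddCommGroup E] (x : ℕ → E) (h : Tendsto (fun n : ℕ => ‖x n‖ ^ ((1 : ℝ) / n)) atTop (nhds 0))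
    (ε : ℝ) (hε : 0 < ε) : ∃ c : ℝ, 0 ≤ c ∧ ∀ n, ‖x n‖ ≤ c * ε ^ n := by
  obtain ⟨N, hN⟩ := eventually_atTop.1 ((h.eventually_lt_const hε).and (eventually_ge_atTop 1))
  refine ⟨1 + ∑ i ∈ Finset.range N, ‖x i‖ / ε ^ i, by positivity, fun n => ?_⟩
  rcases lt_or_ge n N with hn | hn
  · have h1 : ‖x n‖ / ε ^ n ≤ ∑ i ∈ Finset.range N, ‖x i‖ / ε ^ i :=
      Finset.single_le_sum (f := fun i => ‖x i‖ / ε ^ i) (fun i _ => by positivity)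
        (Finset.mem_range.2 hn)
    rw [← div_le_iff₀ (by positivity)]; linarith
  · obtain ⟨h1, h2⟩ := hN n hn
    have h3 : ‖x n‖ ≤ ε ^ n := by
      have h4 : (‖x n‖ ^ ((1 : ℝ) / n)) ^ n ≤ ε ^ n := by gcongr
      rwa [one_div, Real.rpow_inv_natCast_pow (norm_nonneg _) (by omega)] at h4
    have h5 : 0 ≤ ∑ i ∈ Finset.range N, ‖x i‖ / ε ^ i := by positivity
    nlinarith [pow_pos hε n]

end partA

section partB
lemma aux_cover {Z : Type*} [MetricSpace Z] [MeasurableSpace Z] [BorelSpace Z] [Nonempty Z]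
    (D : Set Z) (hD : Measure.hausdorffMeasure 2 D < ⊤) :
    ∃ C : ℝ, 0 ≤ C ∧ ∀ δ : ℝ, 0 < δ → ∃ (z : ℕ → Z) (r : ℕ → ℝ), (∀ i, 0 ≤ r i) ∧ (∀ i, r i ≤ δ) ∧
      (D ⊆ ⋃ i, Metric.closedBall (z i) (r i)) ∧
      ∀ F : Finset ℕ, ∑ i ∈ F, r i ^ 2 ≤ C := by
  classical
  refine ⟨(Measure.hausdorffMeasure 2 D + 1).toReal, ENNReal.toReal_nonneg, fun δ hδ => ?_⟩
  have hlt : Measure.hausdorffMeasure 2 D < Measure.hausdorffMeasure 2 D + 1 :=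
    ENNReal.lt_add_right hD.ne one_ne_zero
  have hA := Measure.hausdorffMeasure_apply 2 D
  have hle : (⨅ (t : ℕ → Set Z) (_ : D ⊆ ⋃ n, t n) (_ : ∀ n, Metric.ediam (t n) ≤ ENNReal.ofReal δ),
      ∑' n, ⨆ _ : (t n).Nonempty, Metric.ediam (t n) ^ (2 : ℝ)) < Measure.hausdorffMeasure 2 D + 1 := by
    refine lt_of_le_of_lt ?_ hlt
    rw [hA]
    exact le_iSup₂_of_le (ENNReal.ofReal δ) (by simpa using hδ) le_rfl
  simp only [iInf_lt_iff] at hle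
  obtain ⟨t, hDt, hdiam, hsum⟩ := hle
  have hfin : ∀ i, Metric.ediam (t i) ≠ ⊤ := fun i => ((hdiam i).trans_lt ENNReal.ofReal_lt_top).ne
  let z : ℕ → Z := fun i => if h : (t i).Nonempty then h.choose else Classical.arbitrary Z
  refine ⟨z, fun i => (Metric.ediam (t i)).toReal, fun i => ENNReal.toReal_nonneg, fun i => ?_, ?_, ?_⟩
  · exact ENNReal.toReal_le_of_le_ofReal hδ.le (hdiam i)
  · intro x hx
    obtain ⟨i, hi⟩ := Set.mem_iUnion.1 (hDt hx)
    refine Set.mem_iUnion.2 ⟨i, ?_⟩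
    have hne : (t i).Nonempty := ⟨x, hi⟩
    have hz : z i ∈ t i := by simp only [z, dif_pos hne]; exact hne.choose_spec
    rw [Metric.mem_closedBall, dist_edist]
    exact ENNReal.toReal_mono (hfin i) (Metric.edist_le_ediam_of_mem hi hz)
  · intro F
    have h1 : ∀ i, ENNReal.ofReal ((Metric.ediam (t i)).toReal ^ 2) ≤
        ⨆ _ : (t i).Nonempty, Metric.ediam (t i) ^ (2 : ℝ) := by
      intro i
      rw [ENNReal.ofReal_pow ENNReal.toReal_nonneg, ENNReal.ofReal_toReal (hfin i)]
      rcases (t i).eq_empty_or_nonempty with he | hne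
      · simp [he]
      · simp [hne]
    rw [← ENNReal.ofReal_le_iff_le_toReal (by simp [hD.ne]), ENNReal.ofReal_sum_of_nonneg (fun i _ => sq_nonneg _)]
    refine (Finset.sum_le_sum fun i _ => h1 i).trans ?_
    exact (ENNReal.sum_le_tsum F).trans hsum.le
end partB

section partC

lemma aux_cs {K V : Type*} [NormedAddCommGroup V] [CompleteSpace V] (v : K → V) (β p : K → ℝ)
    (hβs : Summable fun k => β k ^ 2) (κ : ℝ) (hκ : 0 ≤ κ) (hv : ∀ k, ‖v k‖ ≤ β k * p k)
    (hp : ∀ F : Finset K, ∑ k ∈ F, p k ^ 2 ≤ κ ^ 2) :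
    Summable v ∧ ‖∑' k, v k‖ ≤ √(∑' k, β k ^ 2) * κ := by
  have h1 : ∀ F : Finset K, ∑ k ∈ F, ‖v k‖ ≤ √(∑' k, β k ^ 2) * κ := by
    intro F
    refine (Finset.sum_le_sum fun k _ => hv k).trans ?_
    refine (Real.sum_mul_le_sqrt_mul_sqrt F β p).trans ?_
    gcongr
    · exact hβs.sum_le_tsum F fun k _ => sq_nonneg _
    · exact (Real.sqrt_le_sqrt (hp F)).trans_eq (Real.sqrt_sq hκ)
  have h2 : Summable fun k => ‖v k‖ := summable_of_sum_le (fun k => norm_nonneg _) h1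
  exact ⟨h2.of_norm, (norm_tsum_le_tsum_norm h2).trans (h2.tsum_le_of_sum_le h1)⟩

lemma aux_lp_sum {K : Type*} (z : lp (fun _ : K => ℂ) 2) (F : Finset K) :
    ∑ k ∈ F, ‖z k‖ ^ 2 ≤ ‖z‖ ^ 2 := by
  have := lp.sum_rpow_le_norm_rpow (p := 2) (by norm_num) z F
  simpa using this

lemma aux_lp_norm_le {K : Type*} (z : lp (fun _ : K => ℂ) 2) (C : ℝ) (hC : 0 ≤ C)
    (h : ∀ F : Finset K, ∑ k ∈ F, ‖z k‖ ^ 2 ≤ C ^ 2) : ‖z‖ ≤ C :=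
  lp.norm_le_of_forall_sum_le (p := 2) (by norm_num) hC (by simpa using h)

variable {K : Type*} {E : Type*} [NormedAddCommGroup E] [InnerProductSpace ℂ E] [CompleteSpace E]
  (Mb : K → E →L[ℂ] E) (β : K → ℝ)

/-- the constant `(∑ β²)^{1/2}` -/
noncomputable def bconst (β : K → ℝ) : ℝ := √(∑' k, β k ^ 2)

lemma bconst_nonneg (β : K → ℝ) : 0 ≤ bconst β := Real.sqrt_nonneg _

lemma aux_mop_summable (hβ : ∀ k, ‖Mb k‖ ≤ β k) (hβs : Summable fun k => β k ^ 2)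
    (z : lp (fun _ : K => ℂ) 2) :
    Summable (fun k => z k • Mb k) ∧ ‖∑' k, z k • Mb k‖ ≤ bconst β * ‖z‖ := by
  refine aux_cs _ β (fun k => ‖z k‖) hβs ‖z‖ (norm_nonneg _) (fun k => ?_) (aux_lp_sum z)
  rw [norm_smul, mul_comm]; gcongr; exact hβ k

/-- `z ↦ ∑ z_k Mb_k` -/
noncomputable def mop (hβ : ∀ k, ‖Mb k‖ ≤ β k) (hβs : Summable fun k => β k ^ 2) :
    lp (fun _ : K => ℂ) 2 →L[ℂ] (E →L[ℂ] E) :=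
  LinearMap.mkContinuous
    { toFun := fun z => ∑' k, z k • Mb k
      map_add' := fun z w => by
        rw [← (aux_mop_summable Mb β hβ hβs z).1.tsum_add (aux_mop_summable Mb β hβ hβs w).1]
        simp [add_smul]
      map_smul' := fun c z => by
        rw [RingHom.id_apply, ← (aux_mop_summable Mb β hβ hβs z).1.tsum_const_smul]
        simp [smul_smul] }
    (bconst β) (fun z => (aux_mop_summable Mb β hβ hβs z).2)

variable (hβ : ∀ k, ‖Mb k‖ ≤ β k) (hβs : Summable fun k => β k ^ 2)

lemma mop_def (z : lp (fun _ : K => ℂ) 2) : mop Mb β hβ hβs z = ∑' k, z k • Mb k := rfl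

lemma mop_norm_le (z : lp (fun _ : K => ℂ) 2) : ‖mop Mb β hβ hβs z‖ ≤ bconst β * ‖z‖ :=
  (aux_mop_summable Mb β hβ hβs z).2

lemma mop_apply_le (z : lp (fun _ : K => ℂ) 2) (e : E) :
    ‖mop Mb β hβ hβs z e‖ ≤ bconst β * ‖z‖ * ‖e‖ :=
  (le_opNorm _ _).trans (by gcongr; exact mop_norm_le Mb β hβ hβs z)

lemma mop_hasSum (z : lp (fun _ : K => ℂ) 2) (e : E) :
    HasSum (fun k => z k • Mb k e) (mop Mb β hβ hβs z e) := by
  have h := (aux_mop_summable Mb β hβ hβs z).1.hasSum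
  have h2 := (ContinuousLinearMap.apply ℂ E e).hasSum h
  simpa only [ContinuousLinearMap.apply_apply, mop_def, FunLike.coe_smul, Pi.smul_apply] using h2

lemma mop_commute (A : E →L[ℂ] E) (hA : ∀ k, Commute A (Mb k)) (z : lp (fun _ : K => ℂ) 2) :
    Commute A (mop Mb β hβ hβs z) := by
  rw [mop_def]
  exact Commute.tsum_right _ fun k => (hA k).smul_right _

lemma mop_normal (hadj : ∀ k l, Commute (Mb k) (adjoint (Mb l))) (z : lp (fun _ : K => ℂ) 2) :
    Commute (mop Mb β hβ hβs z) (adjoint (mop Mb β hβ hβs z)) := by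
  have h1 : ∀ l, Commute (star (Mb l)) (mop Mb β hβ hβs z) := fun l =>
    mop_commute Mb β hβ hβs _ (fun k => (hadj k l).symm) z
  have h2 : ∀ l, Commute (star (mop Mb β hβ hβs z)) (Mb l) := fun l => by
    have := (h1 l).star_star
    rw [star_star] at this
    exact this.symm
  exact (mop_commute Mb β hβ hβs _ h2 z).symm

variable {H : Type*} [NormedAddCommGroup H] [NormedSpace ℂ H] (Ma : K → H →L[ℂ] H) (α : K → ℝ)

/-- the multiplication operator -/
noncomputable def dl (S : H →L[ℂ] E) : H →L[ℂ] E := ∑' k, Mb k ∘L S ∘L Ma k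

lemma dl_hasSum (hβ : ∀ k, ‖Mb k‖ ≤ β k) (hβs : Summable fun k => β k ^ 2)
    (Ma : K → H →L[ℂ] H) (α : K → ℝ)
    (hα : ∀ k, ‖Ma k‖ ≤ α k) (hαs : Summable fun k => α k ^ 2)
    (S : H →L[ℂ] E) (u : H) :
    HasSum (fun k => Mb k (S (Ma k u))) (dl Mb Ma S u) := by
  have h : Summable fun k => Mb k ∘L S ∘L Ma k := by
    refine (aux_cs _ β (fun k => ‖S‖ * α k) hβs (‖S‖ * √(∑' k, α k ^ 2)) (by positivity)
      (fun k => ?_) (fun F => ?_)).1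
    · refine (opNorm_comp_le _ _).trans ?_
      have h1 : ‖S ∘L Ma k‖ ≤ ‖S‖ * α k := (opNorm_comp_le _ _).trans (by gcongr; exact hα k)
      exact mul_le_mul (hβ k) h1 (norm_nonneg _) ((norm_nonneg _).trans (hβ k))
    · simp only [mul_pow]
      rw [← Finset.mul_sum, Real.sq_sqrt (tsum_nonneg fun k => sq_nonneg _)]
      gcongr
      exact hαs.sum_le_tsum F fun k _ => sq_nonneg _
  have h2 := (ContinuousLinearMap.apply ℂ E u).hasSum h.hasSum
  simpa only [ContinuousLinearMap.apply_apply, ContinuousLinearMap.comp_apply, dl] using h2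

variable (hα : ∀ k, ‖Ma k‖ ≤ α k) (hαs : Summable fun k => α k ^ 2)

lemma dl_comp (hβ : ∀ k, ‖Mb k‖ ≤ β k) (hβs : Summable fun k => β k ^ 2)
    (Ma : K → H →L[ℂ] H) (α : K → ℝ)
    (hα : ∀ k, ‖Ma k‖ ≤ α k) (hαs : Summable fun k => α k ^ 2)
    (A : E →L[ℂ] E) (hA : ∀ k, Commute A (Mb k)) (S : H →L[ℂ] E) :
    dl Mb Ma (A ∘L S) = A ∘L dl Mb Ma S := by
  ext1 u
  refine (dl_hasSum Mb β hβ hβs Ma α hα hαs (A ∘L S) u).unique ?_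
  have := A.hasSum (dl_hasSum Mb β hβ hβs Ma α hα hαs S u)
  rw [ContinuousLinearMap.comp_apply]
  convert this using 2 with k
  have := congrArg (fun B : E →L[ℂ] E => B (S (Ma k u))) (hA k).eq
  simpa using this.symm

lemma dl_sub_mop (hα : ∀ k, ‖Ma k‖ ≤ α k) (hαs : Summable fun k => α k ^ 2)
    (W : H →L[ℂ] E) (U : Submodule ℂ H) (hUinv : ∀ k, ∀ u ∈ U, Ma k u ∈ U)
    (z : lp (fun _ : K => ℂ) 2) (r : ℝ) (hr : 0 ≤ r)
    (hU : ∀ u ∈ U, ∀ F : Finset K, ∑ k ∈ F, ‖Ma k u - z k • u‖ ^ 2 ≤ (r * ‖u‖) ^ 2)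
    (c : ℝ) (hc : 0 ≤ c) (hW : ∀ u ∈ U, ‖W u‖ ≤ c * ‖u‖) (u : H) (hu : u ∈ U) :
    ‖dl Mb Ma W u - mop Mb β hβ hβs z (W u)‖ ≤ bconst β * r * c * ‖u‖ := by
  have h1 := (dl_hasSum Mb β hβ hβs Ma α hα hαs W u).sub (mop_hasSum Mb β hβ hβs z (W u))
  have h2 : (fun k => Mb k (W (Ma k u)) - z k • Mb k (W u)) =
      fun k => Mb k (W (Ma k u - z k • u)) := by
    ext1 k; simp
  rw [h2] at h1
  rw [← h1.tsum_eq]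
  refine (aux_cs _ β (fun k => c * ‖Ma k u - z k • u‖) hβs (c * (r * ‖u‖)) (by positivity)
    (fun k => ?_) (fun F => ?_)).2.trans_eq (by rw [bconst]; ring)
  · refine (le_opNorm _ _).trans ?_
    exact mul_le_mul (hβ k) (hW _ (U.sub_mem (hUinv k u hu) (U.smul_mem _ hu)))
      (norm_nonneg _) ((norm_nonneg _).trans (hβ k))
  · simp only [mul_pow c]
    rw [← Finset.mul_sum]
    gcongr
    exact hU u hu F

lemma key_local (hα : ∀ k, ‖Ma k‖ ≤ α k) (hαs : Summable fun k => α k ^ 2)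
    (hcomm : ∀ k l, Commute (Mb k) (Mb l))
    (hadj : ∀ k l, Commute (Mb k) (adjoint (Mb l)))
    (T : H →L[ℂ] E)
    (hT : ∀ ε : ℝ, 0 < ε → ∃ c : ℝ, 0 ≤ c ∧ ∀ n, ‖(dl Mb Ma)^[n] T‖ ≤ c * ε ^ n)
    (U : Submodule ℂ H) (hUinv : ∀ k, ∀ u ∈ U, Ma k u ∈ U)
    (z : lp (fun _ : K => ℂ) 2) (r : ℝ) (hr : 0 ≤ r)
    (hU : ∀ u ∈ U, ∀ F : Finset K, ∑ k ∈ F, ‖Ma k u - z k • u‖ ^ 2 ≤ (r * ‖u‖) ^ 2)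
    (u : H) (hu : u ∈ U) :
    ‖mop Mb β hβ hβs z (T u)‖ ≤ bconst β * r * ‖T u‖ := by
  set M := mop Mb β hβ hβs z with hM
  have hB := bconst_nonneg β
  have hMc : ∀ k, Commute M (Mb k) := fun k =>
    (mop_commute Mb β hβ hβs (Mb k) (fun l => hcomm k l) z).symm
  have hε : ∀ ε : ℝ, 0 < ε → ‖M (T u)‖ ≤ (ε + bconst β * r) * ‖T u‖ := by
    intro ε hε
    obtain ⟨c, hc, hcb⟩ := hT ε hε
    have hind : ∀ n i : ℕ, ∀ v ∈ U, ‖((M ^ n) ∘L ((dl Mb Ma)^[i] T)) v‖ ≤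
        (c * ε ^ i * (ε + bconst β * r) ^ n) * ‖v‖ := by
      intro n
      induction n with
      | zero =>
        intro i v _
        simp only [pow_zero, mul_one]
        exact (le_opNorm _ _).trans (by gcongr; exact hcb i)
      | succ n ih =>
        intro i v hv
        have h1 := dl_sub_mop Mb β hβ hβs Ma α hα hαs ((M ^ n) ∘L ((dl Mb Ma)^[i] T)) U hUinv z r hr
          hU _ (by positivity) (ih i) v hv
        rw [dl_comp Mb β hβ hβs Ma α hα hαs (M ^ n) (fun k => (hMc k).pow_left n),
          ← Function.iterate_succ_apply' (dl Mb Ma)] at h1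
        have h2 := ih (i + 1) v hv
        have h3 : ((M ^ (n + 1)) ∘L ((dl Mb Ma)^[i] T)) v =
            M (((M ^ n) ∘L ((dl Mb Ma)^[i] T)) v) := by
          rw [pow_succ']; rfl
        rw [h3]
        have h4 := norm_sub_norm_le (M (((M ^ n) ∘L ((dl Mb Ma)^[i] T)) v))
          (((M ^ n) ∘L ((dl Mb Ma)^[i + 1] T)) v)
        rw [norm_sub_rev] at h4
        calc _ ≤ c * ε ^ (i + 1) * (ε + bconst β * r) ^ n * ‖v‖ +
              bconst β * r * (c * ε ^ i * (ε + bconst β * r) ^ n) * ‖v‖ := by linarith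
          _ = _ := by ring
    refine aux_normal_growth M (mop_normal Mb β hβ hβs hadj z) (T u) (c * ‖u‖) _ (by positivity) ?_
    intro n
    have := hind n 0 u hu
    simp only [pow_zero, mul_one, Function.iterate_zero, id] at this
    calc _ ≤ _ := this
      _ = _ := by ring
  refine le_of_forall_pos_le_add fun η hη => ?_
  have := hε (η / (‖T u‖ + 1)) (by positivity)
  refine this.trans ?_
  have h5 : η / (‖T u‖ + 1) * ‖T u‖ ≤ η := by
    rw [div_mul_eq_mul_div, div_le_iff₀ (by positivity)]
    nlinarith [norm_nonneg (T u)]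
  linarith

lemma key_local' (hα : ∀ k, ‖Ma k‖ ≤ α k) (hαs : Summable fun k => α k ^ 2)
    (hcomm : ∀ k l, Commute (Mb k) (Mb l))
    (hadj : ∀ k l, Commute (Mb k) (adjoint (Mb l)))
    (T : H →L[ℂ] E)
    (hT : ∀ ε : ℝ, 0 < ε → ∃ c : ℝ, 0 ≤ c ∧ ∀ n, ‖(dl Mb Ma)^[n] T‖ ≤ c * ε ^ n)
    (U : Submodule ℂ H) (hUinv : ∀ k, ∀ u ∈ U, Ma k u ∈ U)
    (z : lp (fun _ : K => ℂ) 2) (r : ℝ) (hr : 0 ≤ r)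
    (hU : ∀ u ∈ U, ∀ F : Finset K, ∑ k ∈ F, ‖Ma k u - z k • u‖ ^ 2 ≤ (r * ‖u‖) ^ 2)
    (u : H) (hu : u ∈ U) :
    ‖mop Mb β hβ hβs z (T u)‖ ≤ bconst β * r * (‖T‖ * ‖u‖) ∧
    ‖dl Mb Ma T u‖ ≤ 2 * (bconst β * r * (‖T‖ * ‖u‖)) ∧
    ‖mop Mb β hβ hβs z (dl Mb Ma T u)‖ ≤ bconst β * r * ‖dl Mb Ma T u‖ := by
  have hB := bconst_nonneg β
  have h1 : ‖mop Mb β hβ hβs z (T u)‖ ≤ bconst β * r * (‖T‖ * ‖u‖) :=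
    (key_local Mb β hβ hβs Ma α hα hαs hcomm hadj T hT U hUinv z r hr hU u hu).trans
      (by gcongr; exact le_opNorm _ _)
  have h2 := dl_sub_mop Mb β hβ hβs Ma α hα hαs T U hUinv z r hr hU ‖T‖ (norm_nonneg _)
    (fun v _ => le_opNorm _ _) u hu
  refine ⟨h1, ?_, ?_⟩
  · linarith [norm_sub_norm_le (dl Mb Ma T u) (mop Mb β hβ hβs z (T u))]
  · refine key_local Mb β hβ hβs Ma α hα hαs hcomm hadj (dl Mb Ma T) (fun ε hε => ?_)
      U hUinv z r hr hU u hu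
    obtain ⟨c, hc, hcb⟩ := hT ε hε
    refine ⟨c * ε, by positivity, fun n => ?_⟩
    have := hcb (n + 1)
    rw [Function.iterate_succ_apply] at this
    refine this.trans_eq (by ring)

end partC

section partD

lemma mul_norm_le {X : Type*} [MeasurableSpace X] {μ : Measure X} (a : X → ℂ) (C : ℝ) (hC : 0 ≤ C)
    (haC : ∀ x, ‖a x‖ ≤ C) (M : Lp ℂ 2 μ →L[ℂ] Lp ℂ 2 μ)
    (hM : ∀ f : Lp ℂ 2 μ, ⇑(M f) =ᵐ[μ] fun x => a x * f x) : ‖M‖ ≤ C := by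
  refine opNorm_le_bound _ hC fun f => ?_
  refine Lp.norm_le_mul_norm_of_ae_le_mul ?_
  filter_upwards [hM f] with x hx
  rw [hx, norm_mul]
  gcongr
  exact haC x

lemma mul_commute {X : Type*} [MeasurableSpace X] {μ : Measure X} (a b : X → ℂ)
    (M N : Lp ℂ 2 μ →L[ℂ] Lp ℂ 2 μ)
    (hM : ∀ f : Lp ℂ 2 μ, ⇑(M f) =ᵐ[μ] fun x => a x * f x)
    (hN : ∀ f : Lp ℂ 2 μ, ⇑(N f) =ᵐ[μ] fun x => b x * f x) : Commute M N := by
  show M * N = N * M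
  ext1 f
  simp only [mul_apply_eq_comp]
  apply Lp.ext
  filter_upwards [hM f, hN f, hM (N f), hN (M f)] with x h1 h2 h3 h4
  rw [h3, h4, h1, h2]; ring

lemma mul_adjoint {X : Type*} [MeasurableSpace X] {μ : Measure X} (a : X → ℂ) (ha : Measurable a)
    (C : ℝ) (haC : ∀ x, ‖a x‖ ≤ C) (M : Lp ℂ 2 μ →L[ℂ] Lp ℂ 2 μ)
    (hM : ∀ f : Lp ℂ 2 μ, ⇑(M f) =ᵐ[μ] fun x => a x * f x) (g : Lp ℂ 2 μ) :
    ⇑(adjoint M g) =ᵐ[μ] fun x => (starRingEnd ℂ) (a x) * g x := by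
  have hmem : MemLp (fun x => (starRingEnd ℂ) (a x) * g x) 2 μ := by
    refine MemLp.of_le_mul (c := C) (Lp.memLp g) ?_ ?_
    · exact ((Complex.continuous_conj.measurable.comp ha).aestronglyMeasurable).mul
        (Lp.aestronglyMeasurable g)
    · refine Eventually.of_forall fun x => ?_
      rw [norm_mul, RCLike.norm_conj]
      gcongr
      exact haC x
  have : adjoint M g = hmem.toLp _ := by
    refine ext_inner_right ℂ fun v => ?_
    rw [adjoint_inner_left, L2.inner_def, L2.inner_def]
    refine integral_congr_ae ?_
    filter_upwards [hM v, hmem.coeFn_toLp] with x h1 h2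
    rw [h1, h2]
    simp only [RCLike.inner_apply, map_mul, Complex.conj_conj]
    ring
  rw [this]
  exact hmem.coeFn_toLp

lemma mul_adj_commute {X : Type*} [MeasurableSpace X] {μ : Measure X} (a b : X → ℂ)
    (hb : Measurable b) (C : ℝ) (hbC : ∀ x, ‖b x‖ ≤ C)
    (M N : Lp ℂ 2 μ →L[ℂ] Lp ℂ 2 μ)
    (hM : ∀ f : Lp ℂ 2 μ, ⇑(M f) =ᵐ[μ] fun x => a x * f x)
    (hN : ∀ f : Lp ℂ 2 μ, ⇑(N f) =ᵐ[μ] fun x => b x * f x) : Commute M (adjoint N) :=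
  mul_commute a _ M (adjoint N) hM (mul_adjoint b hb C hbC N hN)

variable {X : Type*} [MeasurableSpace X] {μ : Measure X}

lemma l2_norm_sq {E : Type*} [NormedAddCommGroup E] [InnerProductSpace ℂ E] (f : Lp E 2 μ) :
    Integrable (fun x => ‖f x‖ ^ 2) μ ∧ ‖f‖ ^ 2 = ∫ x, ‖f x‖ ^ 2 ∂μ := by
  refine ⟨(memLp_two_iff_integrable_sq_norm (Lp.aestronglyMeasurable f)).1 (Lp.memLp f), ?_⟩
  have h := inner_self_eq_norm_sq_to_K (𝕜 := ℂ) f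
  rw [L2.inner_def] at h
  simp only [inner_self_eq_norm_sq_to_K] at h
  have h2 : (∫ x, ((‖f x‖ ^ 2 : ℝ) : ℂ) ∂μ) = ((‖f‖ ^ 2 : ℝ) : ℂ) := by
    simpa using h
  rw [integral_complex_ofReal] at h2
  exact_mod_cast h2.symm

lemma l2_sum_sq_le {ι : Type*} {E : Type*} [NormedAddCommGroup E] [InnerProductSpace ℂ E]
    (f : ι → Lp E 2 μ) (F : Finset ι) (g : X → ℝ) (hg : Integrable g μ)
    (h : ∀ᵐ x ∂μ, ∑ k ∈ F, ‖f k x‖ ^ 2 ≤ g x) : ∑ k ∈ F, ‖f k‖ ^ 2 ≤ ∫ x, g x ∂μ := by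
  simp only [fun k => (l2_norm_sq (f k)).2]
  rw [← integral_finsetSum _ fun k _ => (l2_norm_sq (f k)).1]
  exact integral_mono_ae (integrable_finsetSum _ fun k _ => (l2_norm_sq (f k)).1) hg h

lemma l2_norm_le_of_inner {E : Type*} [NormedAddCommGroup E] [InnerProductSpace ℂ E]
    (u v w : Lp E 2 μ) (κ : ℝ) (hκ : 0 ≤ κ)
    (h : ∀ᵐ x ∂μ, ‖inner ℂ (u x) (v x)‖ ≤ κ * (‖u x‖ * ‖w x‖)) :
    ‖inner ℂ u v‖ ≤ κ * (‖u‖ * ‖w‖) := by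
  have hu : MemLp (fun x => ‖u x‖) 2 μ := (Lp.memLp u).norm
  have hw : MemLp (fun x => ‖w x‖) 2 μ := (Lp.memLp w).norm
  have hitg : Integrable (fun x => ‖u x‖ * ‖w x‖) μ := hu.integrable_mul hw
  rw [L2.inner_def]
  refine (norm_integral_le_integral_norm _).trans ?_
  refine (integral_mono_ae (L2.integrable_inner u v).norm (hitg.const_mul κ) h).trans ?_
  rw [integral_const_mul]
  gcongr
  have h1 : (∫ x, ‖u x‖ * ‖w x‖ ∂μ) = inner ℝ (hw.toLp _) (hu.toLp _) := by
    rw [L2.inner_def]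
    refine integral_congr_ae ?_
    filter_upwards [hu.coeFn_toLp, hw.coeFn_toLp] with x h1 h2
    rw [h1, h2]; simp
  rw [h1]
  refine (real_inner_le_norm _ _).trans_eq ?_
  rw [Lp.norm_toLp, Lp.norm_toLp, eLpNorm_norm, eLpNorm_norm, ← Lp.norm_def, ← Lp.norm_def, mul_comm]

lemma lp_coeFn_sum {ι : Type*} {E : Type*} [NormedAddCommGroup E] (f : ι → Lp E 2 μ)
    (F : Finset ι) : ⇑(∑ i ∈ F, f i) =ᵐ[μ] fun x => ∑ i ∈ F, f i x := by
  classical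
  induction F using Finset.induction_on with
  | empty => simp only [Finset.sum_empty]; exact Lp.coeFn_zero E 2 μ
  | insert i F hi ih =>
    rw [Finset.sum_insert hi]
    filter_upwards [Lp.coeFn_add (f i) (∑ i ∈ F, f i), ih] with x h1 h2
    rw [h1, Finset.sum_insert hi, Pi.add_apply, h2]

/-- functions supported in `A` -/
def suppSub (μ : Measure X) (A : Set X) : Submodule ℂ (Lp ℂ 2 μ) where
  carrier := {u | ∀ᵐ x ∂μ, x ∉ A → u x = 0}
  add_mem' := by
    intro u v hu hv
    filter_upwards [hu, hv, Lp.coeFn_add u v] with x h1 h2 h3 hx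
    rw [h3, Pi.add_apply, h1 hx, h2 hx, add_zero]
  zero_mem' := by
    filter_upwards [Lp.coeFn_zero ℂ 2 μ] with x h1 _
    rw [h1]; rfl
  smul_mem' := by
    intro c u hu
    filter_upwards [hu, Lp.coeFn_smul c u] with x h1 h2 hx
    rw [h2, Pi.smul_apply, h1 hx, smul_zero]

variable {K : Type*} (a : K → X → ℂ) (α : K → ℝ)

/-- the joint value map -/
noncomputable def jv (haC : ∀ k x, ‖a k x‖ ≤ α k) (hαs : Summable fun k => α k ^ 2) (x : X) :
    lp (fun _ : K => ℂ) 2 :=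
  ⟨fun k => a k x, memℓp_gen (by
    refine Summable.of_nonneg_of_le (fun k => by positivity) (fun k => ?_) hαs
    simp only [ENNReal.toReal_ofNat, Real.rpow_ofNat]
    gcongr
    exact haC k x)⟩

variable (haC : ∀ k x, ‖a k x‖ ≤ α k) (hαs : Summable fun k => α k ^ 2)

lemma jv_apply (x : X) (k : K) : jv a α haC hαs x k = a k x := rfl

lemma jv_norm_le (x : X) : ‖jv a α haC hαs x‖ ≤ bconst α := by
  refine aux_lp_norm_le _ _ (bconst_nonneg α) fun F => ?_
  rw [bconst, Real.sq_sqrt (tsum_nonneg fun k => sq_nonneg _)]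
  refine le_trans (Finset.sum_le_sum fun k _ => ?_) (hαs.sum_le_tsum F fun k _ => sq_nonneg _)
  rw [jv_apply]
  gcongr
  exact haC k x

lemma jv_meas [Countable K] (ha : ∀ k, Measurable (a k)) :
    StronglyMeasurable (jv a α haC hαs) := by
  classical
  refine stronglyMeasurable_of_tendsto (atTop : Filter (Finset K))
    (f := fun F x => ∑ k ∈ F, lp.single 2 k (a k x)) (fun F => ?_) ?_
  · refine Finset.stronglyMeasurable_fun_sum _ fun k _ => ?_
    exact (lp.isometry_single (E := fun _ : K => ℂ) (p := 2) k).continuous.comp_stronglyMeasurable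
      (ha k).stronglyMeasurable
  · rw [tendsto_pi_nhds]
    intro x
    exact lp.hasSum_single (by norm_num) (jv a α haC hαs x)

variable (Ma : K → (Lp ℂ 2 μ →L[ℂ] Lp ℂ 2 μ))
    (hMa : ∀ (k : K) (f : Lp ℂ 2 μ), ⇑(Ma k f) =ᵐ[μ] fun x => a k x * f x)

lemma suppSub_inv (hMa : ∀ (k : K) (f : Lp ℂ 2 μ), ⇑(Ma k f) =ᵐ[μ] fun x => a k x * f x)
    (A : Set X) (k : K) (u : Lp ℂ 2 μ) (hu : u ∈ suppSub μ A) :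
    Ma k u ∈ suppSub μ A := by
  have hu' : ∀ᵐ x ∂μ, x ∉ A → u x = 0 := hu
  show ∀ᵐ x ∂μ, x ∉ A → Ma k u x = 0
  filter_upwards [hu', hMa k u] with x h1 h2 hx
  rw [h2, h1 hx, mul_zero]

lemma suppSub_est (hMa : ∀ (k : K) (f : Lp ℂ 2 μ), ⇑(Ma k f) =ᵐ[μ] fun x => a k x * f x)
    (A : Set X) (z : lp (fun _ : K => ℂ) 2) (r : ℝ) (hr : 0 ≤ r)
    (hA : ∀ x ∈ A, ‖jv a α haC hαs x - z‖ ≤ r)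
    (u : Lp ℂ 2 μ) (hu : u ∈ suppSub μ A) (F : Finset K) :
    ∑ k ∈ F, ‖Ma k u - z k • u‖ ^ 2 ≤ (r * ‖u‖) ^ 2 := by
  have hu' : ∀ᵐ x ∂μ, x ∉ A → u x = 0 := hu
  have h := l2_sum_sq_le (fun k => Ma k u - z k • u) F (fun x => r ^ 2 * ‖u x‖ ^ 2)
    ((l2_norm_sq u).1.const_mul _) ?_
  · rwa [integral_const_mul, ← (l2_norm_sq u).2, ← mul_pow] at h
  · have h1 : ∀ᵐ x ∂μ, ∀ k ∈ F, (Ma k u - z k • u) x = (a k x - z k) * u x := by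
      rw [Filter.eventually_all_finset]
      intro k _
      filter_upwards [hMa k u, Lp.coeFn_sub (Ma k u) (z k • u), Lp.coeFn_smul (z k) u]
        with x h1 h2 h3
      rw [h2, Pi.sub_apply, h1, h3, Pi.smul_apply, smul_eq_mul]; ring
    filter_upwards [h1, hu'] with x h1 h2
    rw [Finset.sum_congr rfl fun k hk => by rw [h1 k hk, norm_mul, mul_pow]]
    rw [← Finset.sum_mul]
    by_cases hx : x ∈ A
    · gcongr
      have h3 := aux_lp_sum (jv a α haC hαs x - z) F
      refine le_trans h3 ?_
      gcongr
      exact hA x hx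
    · simp [h2 hx]

end partD

section partE

/-- partition data at scale `δ` -/
structure PD {X L : Type*} [MeasurableSpace X] [NormedAddCommGroup L] (μ : Measure X) (φ : X → L)
    (G : Set X) (C δ : ℝ) where
  J : ℕ
  A : ℕ → Set X
  z : ℕ → L
  r : ℕ → ℝ
  hA : ∀ i, MeasurableSet (A i)
  hfin : ∀ i, μ (A i) ≠ ⊤
  hdisj : Pairwise (Function.onFun Disjoint A)
  hsub : ∀ i, A i ⊆ G
  hball : ∀ i, ∀ x ∈ A i, ‖φ x - z i‖ ≤ r i
  hr0 : ∀ i, 0 ≤ r i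
  hrδ : ∀ i, r i ≤ δ
  hsum : ∑ i ∈ Finset.range J, r i ^ 2 ≤ C
  hmeas : μ (G \ ⋃ i ∈ Finset.range J, A i) ≤ ENNReal.ofReal δ

lemma exists_PD {X L : Type*} [MeasurableSpace X] [NormedAddCommGroup L] [MeasurableSpace L]
    [BorelSpace L] (μ : Measure X) (φ : X → L) (hφ : StronglyMeasurable φ)
    (G : Set X) (hG : MeasurableSet G) (hGfin : μ G ≠ ⊤) (D : Set L)
    (hD : Measure.hausdorffMeasure 2 D < ⊤) (hφD : ∀ᵐ x ∂μ, φ x ∈ D) :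
    ∃ C : ℝ, 0 ≤ C ∧ ∀ δ : ℝ, 0 < δ → Nonempty (PD μ φ G C δ) := by
  obtain ⟨C, hC, h⟩ := aux_cover D hD
  refine ⟨C, hC, fun δ hδ => ?_⟩
  obtain ⟨z, r, hr0, hrδ, hcov, hsum⟩ := h δ hδ
  let Bs : ℕ → Set X := fun i => G ∩ {x | ‖φ x - z i‖ ≤ r i}
  have hBs : ∀ i, MeasurableSet (Bs i) := fun i =>
    hG.inter (measurableSet_le (hφ.sub stronglyMeasurable_const).norm.measurable measurable_const)
  have hsubB : ∀ i, disjointed Bs i ⊆ Bs i := fun i => disjointed_le Bs i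
  have hGsub : ∀ i, disjointed Bs i ⊆ G := fun i => (hsubB i).trans Set.inter_subset_left
  have hm : ∀ i, MeasurableSet (disjointed Bs i) := fun i => MeasurableSet.disjointed hBs i
  have htend : Tendsto (fun J : ℕ => μ (G \ ⋃ i ∈ Finset.range J, disjointed Bs i)) atTop
      (nhds (μ (⋂ J : ℕ, (G \ ⋃ i ∈ Finset.range J, disjointed Bs i)))) := by
    refine tendsto_measure_iInter_atTop (fun J => ?_) ?_ ⟨0, ?_⟩
    · exact (hG.diff (Finset.measurableSet_biUnion _ fun i _ => hm i)).nullMeasurableSet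
    · intro J J' hJ
      refine Set.sdiff_subset_sdiff_right ?_
      exact Set.biUnion_subset_biUnion_left (fun i hi => by
        simp only [SetLike.mem_coe, Finset.mem_range] at hi ⊢; omega)
    · exact ne_top_of_le_ne_top hGfin (measure_mono Set.sdiff_subset)
  have hzero : μ (⋂ J : ℕ, (G \ ⋃ i ∈ Finset.range J, disjointed Bs i)) = 0 := by
    refine measure_mono_null ?_ (ae_iff.1 hφD)
    intro x hx hxD
    obtain ⟨i, hi⟩ := Set.mem_iUnion.1 (hcov hxD)
    have hxG : x ∈ G := (Set.mem_iInter.1 hx 0).1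
    have hxB : x ∈ ⋃ i, Bs i := Set.mem_iUnion.2 ⟨i, hxG, by
      rw [Metric.mem_closedBall, dist_eq_norm] at hi; exact hi⟩
    rw [← iUnion_disjointed] at hxB
    obtain ⟨j, hj⟩ := Set.mem_iUnion.1 hxB
    exact (Set.mem_iInter.1 hx (j + 1)).2 (Set.mem_biUnion (by simp) hj)
  rw [hzero] at htend
  obtain ⟨J, hJ⟩ := (htend.eventually (ge_mem_nhds (ENNReal.ofReal_pos.2 hδ))).exists
  exact ⟨{ J := J, A := disjointed Bs, z := z, r := r, hA := hm
           hfin := fun i => ne_top_of_le_ne_top hGfin (measure_mono (hGsub i))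
           hdisj := disjoint_disjointed Bs
           hsub := hGsub
           hball := fun i x hx => (hsubB i hx).2
           hr0 := hr0, hrδ := hrδ, hsum := hsum _, hmeas := hJ }⟩

end partE

section partF

lemma real_aux (m b k : ℝ) (hm : 0 ≤ m) (hb : 0 ≤ b) (h : b ≤ k * √m) :
    m * (m⁻¹ * b) ^ 2 ≤ k ^ 2 := by
  rcases hm.eq_or_lt with h0 | h0
  · rw [← h0]; simp; positivity
  · have h1 : b ^ 2 ≤ k ^ 2 * m := by
      calc b ^ 2 ≤ (k * √m) ^ 2 := by gcongr
        _ = k ^ 2 * m := by rw [mul_pow, Real.sq_sqrt hm]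
    calc m * (m⁻¹ * b) ^ 2 = b ^ 2 / m := by field_simp
      _ ≤ k ^ 2 := by rw [div_le_iff₀ h0]; exact h1

variable {X L E : Type*} [MeasurableSpace X] [NormedAddCommGroup L] [NormedSpace ℂ L]
  [NormedAddCommGroup E] [InnerProductSpace ℂ E]
  {μ : Measure X} {φ : X → L} {G : Set X} {C δ : ℝ}

namespace PD

lemma sum_ind_mem {V : Type*} [AddCommMonoid V] (P : PD μ φ G C δ) (g : ℕ → X → V) (x : X) (i : ℕ)
    (hi : i ∈ Finset.range P.J) (hx : x ∈ P.A i) :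
    ∑ j ∈ Finset.range P.J, (P.A j).indicator (g j) x = g i x := by
  rw [Finset.sum_eq_single_of_mem i hi, Set.indicator_of_mem hx]
  intro j _ hji
  refine Set.indicator_of_notMem (fun hxj => ?_) _
  exact Set.disjoint_left.1 (P.hdisj hji) hxj hx

lemma sum_ind_not {V : Type*} [AddCommMonoid V] (P : PD μ φ G C δ) (g : ℕ → X → V) (x : X)
    (hx : ∀ i ∈ Finset.range P.J, x ∉ P.A i) :
    ∑ j ∈ Finset.range P.J, (P.A j).indicator (g j) x = 0 :=
  Finset.sum_eq_zero fun j hj => Set.indicator_of_notMem (hx j hj) _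

/-- measure of a piece -/
noncomputable def m (P : PD μ φ G C δ) (i : ℕ) : ℝ := μ.real (P.A i)

lemma m_nonneg (P : PD μ φ G C δ) (i : ℕ) : 0 ≤ P.m i := measureReal_nonneg

/-- indicator of a piece -/
noncomputable def chi (P : PD μ φ G C δ) (i : ℕ) : Lp ℂ 2 μ :=
  indicatorConstLp 2 (P.hA i) (P.hfin i) (1 : ℂ)

lemma chi_norm (P : PD μ φ G C δ) (i : ℕ) : ‖P.chi i‖ = √(P.m i) := by
  rw [chi, norm_indicatorConstLp (by norm_num) (by norm_num), Real.sqrt_eq_rpow]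
  simp [m]

lemma chi_coe (P : PD μ φ G C δ) (i : ℕ) : ⇑(P.chi i) =ᵐ[μ] (P.A i).indicator fun _ => (1 : ℂ) :=
  indicatorConstLp_coeFn

lemma chi_zero (P : PD μ φ G C δ) (i : ℕ) (h : P.m i = 0) : P.chi i = 0 := by
  rw [← norm_eq_zero, chi_norm, h, Real.sqrt_zero]

lemma chi_mem (P : PD μ φ G C δ) (i : ℕ) : P.chi i ∈ suppSub μ (P.A i) := by
  show ∀ᵐ x ∂μ, x ∉ P.A i → P.chi i x = 0
  filter_upwards [P.chi_coe i] with x h hx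
  rw [h, Set.indicator_of_notMem hx]

/-- average value of an operator over a piece -/
noncomputable def av (P : PD μ φ G C δ) (R : Lp ℂ 2 μ →L[ℂ] E) (i : ℕ) : E :=
  ((P.m i : ℂ))⁻¹ • R (P.chi i)

lemma av_norm (P : PD μ φ G C δ) (R : Lp ℂ 2 μ →L[ℂ] E) (i : ℕ) :
    ‖P.av R i‖ = (P.m i)⁻¹ * ‖R (P.chi i)‖ := by
  rw [av, norm_smul, norm_inv, Complex.norm_real, Real.norm_of_nonneg (P.m_nonneg i)]

lemma m_smul_av (P : PD μ φ G C δ) (R : Lp ℂ 2 μ →L[ℂ] E) (i : ℕ) :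
    (P.m i : ℂ) • P.av R i = R (P.chi i) := by
  by_cases h : P.m i = 0
  · rw [av, P.chi_zero i h]; simp
  · rw [av, smul_smul, mul_inv_cancel₀ (by exact_mod_cast h), one_smul]

/-- step function -/
noncomputable def q (P : PD μ φ G C δ) (R : Lp ℂ 2 μ →L[ℂ] E) : Lp E 2 μ :=
  ∑ i ∈ Finset.range P.J, indicatorConstLp 2 (P.hA i) (P.hfin i) (P.av R i)

lemma q_coe (P : PD μ φ G C δ) (R : Lp ℂ 2 μ →L[ℂ] E) :
    ⇑(P.q R) =ᵐ[μ] fun x => ∑ i ∈ Finset.range P.J, (P.A i).indicator (fun _ => P.av R i) x := by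
  have h : ∀ᵐ x ∂μ, ∀ i ∈ Finset.range P.J, indicatorConstLp 2 (P.hA i) (P.hfin i) (P.av R i) x =
      (P.A i).indicator (fun _ => P.av R i) x := by
    rw [Filter.eventually_all_finset]
    intro i _
    exact indicatorConstLp_coeFn
  filter_upwards [h, lp_coeFn_sum (fun i => indicatorConstLp 2 (P.hA i) (P.hfin i) (P.av R i))
    (Finset.range P.J)] with x h1 h2
  rw [q, h2]
  exact Finset.sum_congr rfl h1

lemma norm_le_part (P : PD μ φ G C δ) (w : Lp E 2 μ) (κ : ℕ → ℝ)
    (h : ∀ᵐ x ∂μ, (∀ i ∈ Finset.range P.J, x ∈ P.A i → ‖w x‖ ≤ κ i) ∧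
      ((∀ i ∈ Finset.range P.J, x ∉ P.A i) → w x = 0)) :
    ‖w‖ ^ 2 ≤ ∑ i ∈ Finset.range P.J, P.m i * κ i ^ 2 := by
  have hitg : ∀ i, Integrable ((P.A i).indicator fun _ => κ i ^ 2) μ := fun i =>
    (integrable_indicator_iff (P.hA i)).2 (integrableOn_const (P.hfin i))
  have h2 : ∑ i ∈ Finset.range P.J, P.m i * κ i ^ 2 =
      ∫ x, ∑ i ∈ Finset.range P.J, (P.A i).indicator (fun _ => κ i ^ 2) x ∂μ := by
    rw [integral_finsetSum _ fun i _ => hitg i]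
    refine Finset.sum_congr rfl fun i _ => ?_
    rw [integral_indicator_const _ (P.hA i), smul_eq_mul, m]
  rw [h2, (l2_norm_sq w).2]
  refine integral_mono_ae (l2_norm_sq w).1 (integrable_finsetSum _ fun i _ => hitg i) ?_
  filter_upwards [h] with x hx
  by_cases hex : ∃ i ∈ Finset.range P.J, x ∈ P.A i
  · obtain ⟨i, hi, hxi⟩ := hex
    rw [P.sum_ind_mem (fun i _ => κ i ^ 2) x i hi hxi]
    have := hx.1 i hi hxi
    gcongr
  · push Not at hex
    rw [P.sum_ind_not (fun i _ => κ i ^ 2) x hex, hx.2 hex]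
    simp

variable (M : L →L[ℂ] (E →L[ℂ] E)) (hφ : StronglyMeasurable φ) (Rb : ℝ) (hRb : ∀ x, ‖φ x‖ ≤ Rb)

lemma spart_memLp (hφ : StronglyMeasurable φ) (Rb : ℝ) (hRb : ∀ x, ‖φ x‖ ≤ Rb)
    (M : L →L[ℂ] (E →L[ℂ] E)) (A : Set X) (hA : MeasurableSet A) (hfin : μ A ≠ ⊤) (t : E) :
    MemLp (A.indicator fun x => M (φ x) t) 2 μ := by
  rw [memLp_indicator_iff_restrict hA]
  have : IsFiniteMeasure (μ.restrict A) := ⟨by simpa using hfin.lt_top⟩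
  refine MemLp.of_bound ?_ (‖M‖ * Rb * ‖t‖) (Eventually.of_forall fun x => ?_)
  · have hc : Continuous fun y : L => M y t := by fun_prop
    exact (hc.comp_stronglyMeasurable hφ).aestronglyMeasurable
  · refine (le_opNorm _ _).trans ?_
    gcongr
    refine (le_opNorm _ _).trans ?_
    gcongr
    exact hRb x

/-- kernel of the truncated operator -/
noncomputable def s (P : PD μ φ G C δ) (T : Lp ℂ 2 μ →L[ℂ] E) : Lp E 2 μ :=
  ∑ i ∈ Finset.range P.J,
    (spart_memLp hφ Rb hRb M (P.A i) (P.hA i) (P.hfin i) (P.av T i)).toLp _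

lemma s_coe (P : PD μ φ G C δ) (T : Lp ℂ 2 μ →L[ℂ] E) :
    ⇑(P.s M hφ Rb hRb T) =ᵐ[μ] fun x =>
      ∑ i ∈ Finset.range P.J, (P.A i).indicator (fun x => M (φ x) (P.av T i)) x := by
  have h : ∀ᵐ x ∂μ, ∀ i ∈ Finset.range P.J,
      (spart_memLp hφ Rb hRb M (P.A i) (P.hA i) (P.hfin i) (P.av T i)).toLp _ x =
      (P.A i).indicator (fun x => M (φ x) (P.av T i)) x := by
    rw [Filter.eventually_all_finset]
    intro i _
    exact MemLp.coeFn_toLp _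
  filter_upwards [h, lp_coeFn_sum (fun i =>
    (spart_memLp hφ Rb hRb M (P.A i) (P.hA i) (P.hfin i) (P.av T i)).toLp _)
    (Finset.range P.J)] with x h1 h2
  rw [s, h2]
  exact Finset.sum_congr rfl h1

lemma q_norm_le (P : PD μ φ G C δ) (R : Lp ℂ 2 μ →L[ℂ] E) (κ : ℝ)
    (hR : ∀ i, ‖R (P.chi i)‖ ≤ κ * P.r i * √(P.m i)) : ‖P.q R‖ ^ 2 ≤ κ ^ 2 * C := by
  refine (P.norm_le_part (P.q R) (fun i => ‖P.av R i‖) ?_).trans ?_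
  · filter_upwards [P.q_coe R] with x hx
    refine ⟨fun i hi hxi => ?_, fun hn => ?_⟩
    · rw [hx, P.sum_ind_mem _ x i hi hxi]
    · rw [hx, P.sum_ind_not _ x hn]
  · refine le_trans (Finset.sum_le_sum fun i _ => ?_) (b := ∑ i ∈ Finset.range P.J, κ ^ 2 * P.r i ^ 2) ?_
    · rw [av_norm, ← mul_pow κ]
      exact real_aux _ _ _ (P.m_nonneg i) (norm_nonneg _) (hR i)
    · rw [← Finset.mul_sum]
      gcongr
      exact P.hsum

lemma d_norm_le (P : PD μ φ G C δ) (R T : Lp ℂ 2 μ →L[ℂ] E) (B τ : ℝ) (hB : 0 ≤ B)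
    (hM : ∀ z, ‖M z‖ ≤ B * ‖z‖) (hτ : ∀ u, ‖T u‖ ≤ τ * ‖u‖)
    (hR : ∀ i, ‖R (P.chi i)‖ ≤ 2 * (B * τ) * P.r i * √(P.m i))
    (hT : ∀ i, ‖M (P.z i) (T (P.chi i))‖ ≤ (B * τ) * P.r i * √(P.m i)) :
    ‖P.q R - P.s M hφ Rb hRb T‖ ^ 2 ≤ (4 * (B * τ)) ^ 2 * C := by
  refine (P.norm_le_part _ (fun i => (P.m i)⁻¹ * (4 * (B * τ) * P.r i * √(P.m i))) ?_).trans ?_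
  · filter_upwards [P.q_coe R, P.s_coe M hφ Rb hRb T, Lp.coeFn_sub (P.q R) (P.s M hφ Rb hRb T)]
      with x hx hx2 hx3
    refine ⟨fun i hi hxi => ?_, fun hn => ?_⟩
    · rw [hx3, Pi.sub_apply, hx, hx2, P.sum_ind_mem _ x i hi hxi, P.sum_ind_mem _ x i hi hxi]
      have h1 : P.av R i - M (φ x) (P.av T i) =
          ((P.m i : ℂ))⁻¹ • (R (P.chi i) - M (φ x) (T (P.chi i))) := by
        rw [av, av, map_smul, smul_sub]
      rw [h1, norm_smul, norm_inv, Complex.norm_real, Real.norm_of_nonneg (P.m_nonneg i)]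
      have hm := P.m_nonneg i
      gcongr
      have h2 : M (φ x) (T (P.chi i)) = M (φ x - P.z i) (T (P.chi i)) + M (P.z i) (T (P.chi i)) := by
        rw [map_sub]; simp
      have h3 : ‖M (φ x - P.z i) (T (P.chi i))‖ ≤ (B * τ) * P.r i * √(P.m i) := by
        refine (le_opNorm _ _).trans ?_
        calc _ ≤ (B * ‖φ x - P.z i‖) * (τ * ‖P.chi i‖) := by
              gcongr
              · exact hM _
              · exact hτ _
          _ ≤ (B * P.r i) * (τ * ‖P.chi i‖) := by
              have : 0 ≤ τ * ‖P.chi i‖ := (norm_nonneg _).trans (hτ (P.chi i))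
              gcongr
              exact P.hball i x hxi
          _ = _ := by rw [chi_norm]; ring
      rw [h2]
      have := norm_sub_le (R (P.chi i)) (M (φ x - P.z i) (T (P.chi i)) + M (P.z i) (T (P.chi i)))
      have h5 := norm_add_le (M (φ x - P.z i) (T (P.chi i))) (M (P.z i) (T (P.chi i)))
      linarith [hR i, hT i]
    · rw [hx3, Pi.sub_apply, hx, hx2, P.sum_ind_not _ x hn, P.sum_ind_not _ x hn, sub_zero]
  · refine le_trans (Finset.sum_le_sum fun i _ => ?_)
      (b := ∑ i ∈ Finset.range P.J, (4 * (B * τ)) ^ 2 * P.r i ^ 2) ?_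
    · rw [← mul_pow (4 * (B * τ))]
      refine real_aux _ _ _ (P.m_nonneg i) ?_ le_rfl
      have : 0 ≤ 2 * (B * τ) * P.r i * √(P.m i) := (norm_nonneg _).trans (hR i)
      linarith
    · rw [← Finset.mul_sum]
      gcongr
      exact P.hsum

/-- `⟪q_l, s_n⟫` is small for fine `l` -/
lemma q_s_inner [CompleteSpace E] {δ' : ℝ} (P : PD μ φ G C δ) (P' : PD μ φ G C δ')
    (R T : Lp ℂ 2 μ →L[ℂ] E) (B : ℝ) (hB : 0 ≤ B) (hδ : 0 ≤ δ)
    (hM : ∀ z, ‖M z‖ ≤ B * ‖z‖) (hnorm : ∀ z, Commute (M z) (adjoint (M z)))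
    (hR : ∀ i, ‖M (P.z i) (R (P.chi i))‖ ≤ B * P.r i * ‖R (P.chi i)‖) :
    ‖inner ℂ (P.q R) (P'.s M hφ Rb hRb T)‖ ≤
      (2 * B * δ * ‖P.q R‖) * ∑ j ∈ Finset.range P'.J,
        ‖indicatorConstLp 2 (P'.hA j) (P'.hfin j) (P'.av T j)‖ := by
  rw [s, inner_sum, Finset.mul_sum]
  refine (norm_sum_le _ _).trans (Finset.sum_le_sum fun j _ => ?_)
  rw [mul_assoc]
  refine l2_norm_le_of_inner _ _ _ _ (by positivity) ?_
  filter_upwards [P.q_coe R, MemLp.coeFn_toLp (spart_memLp hφ Rb hRb M (P'.A j) (P'.hA j) (P'.hfin j) (P'.av T j)),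
    indicatorConstLp_coeFn (p := 2) (hs := P'.hA j) (hμs := P'.hfin j) (c := P'.av T j)]
    with x h1 h2 h3
  rw [h2, h3]
  by_cases hx : x ∈ P'.A j
  swap
  · rw [Set.indicator_of_notMem hx, Set.indicator_of_notMem hx]; simp
  rw [Set.indicator_of_mem hx, Set.indicator_of_mem hx]
  rw [← adjoint_inner_left]
  refine (norm_inner_le_norm _ _).trans ?_
  rw [aux_normal_norm _ (hnorm _), ← mul_assoc]
  gcongr
  rw [h1]
  by_cases hex : ∃ i ∈ Finset.range P.J, x ∈ P.A i
  · obtain ⟨i, hi, hxi⟩ := hex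
    rw [P.sum_ind_mem _ x i hi hxi]
    have e1 : M (φ x) (P.av R i) = M (φ x - P.z i) (P.av R i) + M (P.z i) (P.av R i) := by
      rw [map_sub]; simp
    have e2 : ‖M (φ x - P.z i) (P.av R i)‖ ≤ B * δ * ‖P.av R i‖ := by
      refine (le_opNorm _ _).trans ?_
      gcongr
      refine (hM _).trans ?_
      gcongr
      exact (P.hball i x hxi).trans (P.hrδ i)
    have e3 : ‖M (P.z i) (P.av R i)‖ ≤ B * δ * ‖P.av R i‖ := by
      rw [av_norm, av, map_smul, norm_smul, norm_inv, Complex.norm_real,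
        Real.norm_of_nonneg (P.m_nonneg i)]
      have hm := P.m_nonneg i
      calc _ ≤ (P.m i)⁻¹ * (B * P.r i * ‖R (P.chi i)‖) := by gcongr; exact hR i
        _ ≤ (P.m i)⁻¹ * (B * δ * ‖R (P.chi i)‖) := by gcongr; exact P.hrδ i
        _ = _ := by ring
    rw [e1]
    linarith [norm_add_le (M (φ x - P.z i) (P.av R i)) (M (P.z i) (P.av R i))]
  · push Not at hex
    rw [P.sum_ind_not _ x hex]; simp

/-- pairing `q` with a constant -/
lemma q_const_inner [CompleteSpace E] (P : PD μ φ G C δ) (R : Lp ℂ 2 μ →L[ℂ] E) (hG : MeasurableSet G)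
    (hGf : μ G ≠ ⊤) (e : E) :
    inner ℂ (P.q R) (indicatorConstLp 2 hG hGf e) =
      inner ℂ (R (∑ i ∈ Finset.range P.J, P.chi i)) e := by
  rw [q, sum_inner, map_sum, sum_inner]
  refine Finset.sum_congr rfl fun i _ => ?_
  rw [L2.inner_indicatorConstLp_indicatorConstLp (P.hA i) hG (P.hfin i) hGf, Set.inter_eq_left.2 (P.hsub i),
    ← P.m_smul_av R i, inner_smul_left, Complex.conj_ofReal]
  rfl

lemma chi_sum_close (P : PD μ φ G C δ) (hδ : 0 ≤ δ) (hG : MeasurableSet G) (hGf : μ G ≠ ⊤) :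
    ‖∑ i ∈ Finset.range P.J, P.chi i - indicatorConstLp 2 hG hGf (1 : ℂ)‖ ≤ √δ := by
  have hms : MeasurableSet (G \ ⋃ i ∈ Finset.range P.J, P.A i) :=
    hG.diff (Finset.measurableSet_biUnion _ fun i _ => P.hA i)
  have hfin : μ (G \ ⋃ i ∈ Finset.range P.J, P.A i) ≠ ⊤ :=
    ne_top_of_le_ne_top hGf (measure_mono Set.sdiff_subset)
  have h1 : ‖indicatorConstLp 2 hms hfin (1 : ℂ)‖ ≤ √δ := by
    rw [norm_indicatorConstLp (by norm_num) (by norm_num), Real.sqrt_eq_rpow]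
    simp only [norm_one, one_mul, ENNReal.toReal_ofNat]
    refine Real.rpow_le_rpow measureReal_nonneg ?_ (by norm_num)
    exact ENNReal.toReal_le_of_le_ofReal hδ P.hmeas
  refine le_trans (Lp.norm_le_norm_of_ae_le ?_) h1
  have h : ∀ᵐ x ∂μ, ∀ i ∈ Finset.range P.J, P.chi i x = (P.A i).indicator (fun _ => (1 : ℂ)) x := by
    rw [Filter.eventually_all_finset]
    intro i _
    exact P.chi_coe i
  filter_upwards [h, lp_coeFn_sum P.chi (Finset.range P.J),
    indicatorConstLp_coeFn (p := 2) (hs := hms) (hμs := hfin) (c := (1 : ℂ)),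
    indicatorConstLp_coeFn (p := 2) (hs := hG) (hμs := hGf) (c := (1 : ℂ)),
    Lp.coeFn_sub (∑ i ∈ Finset.range P.J, P.chi i) (indicatorConstLp 2 hG hGf (1 : ℂ))]
    with x h1 h2 h3 h4 h5
  rw [h5, Pi.sub_apply, h2, h3, h4, Finset.sum_congr rfl h1]
  by_cases hex : ∃ i ∈ Finset.range P.J, x ∈ P.A i
  · obtain ⟨i, hi, hxi⟩ := hex
    rw [P.sum_ind_mem _ x i hi hxi, Set.indicator_of_mem (P.hsub i hxi)]
    simp
  · push Not at hex
    rw [P.sum_ind_not _ x hex]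
    by_cases hxG : x ∈ G
    · have : x ∈ G \ ⋃ i ∈ Finset.range P.J, P.A i := ⟨hxG, by
        simp only [Set.mem_iUnion, not_exists]; exact hex⟩
      rw [Set.indicator_of_mem hxG, Set.indicator_of_mem this]; simp
    · rw [Set.indicator_of_notMem hxG]; simp

end PD
end partF

section partG

variable {X E K : Type*} [MeasurableSpace X] {μ : Measure X}
  [NormedAddCommGroup E] [InnerProductSpace ℂ E] [CompleteSpace E]
  (Mb : K → E →L[ℂ] E) (β : K → ℝ)
  (hβ : ∀ k, ‖Mb k‖ ≤ β k) (hβs : Summable fun k => β k ^ 2)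
  (a : K → X → ℂ) (α : K → ℝ)
  (haC : ∀ k x, ‖a k x‖ ≤ α k) (hαs : Summable fun k => α k ^ 2)
  (Ma : K → (Lp ℂ 2 μ →L[ℂ] Lp ℂ 2 μ)) (hα : ∀ k, ‖Ma k‖ ≤ α k)
  (hMa : ∀ (k : K) (f : Lp ℂ 2 μ), ⇑(Ma k f) =ᵐ[μ] fun x => a k x * f x)
  {G : Set X} {C δ : ℝ} (T : Lp ℂ 2 μ →L[ℂ] E)

lemma avg_bound (hα : ∀ k, ‖Ma k‖ ≤ α k)
    (hMa : ∀ (k : K) (f : Lp ℂ 2 μ), ⇑(Ma k f) =ᵐ[μ] fun x => a k x * f x)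
    (T : Lp ℂ 2 μ →L[ℂ] E)
    (P : PD μ (jv a α haC hαs) G C δ) (hδ : 0 ≤ δ) (hG : MeasurableSet G) (hGf : μ G ≠ ⊤)
    (w : ℕ → ℝ) (y : ℕ → lp (fun _ : K => ℂ) 2)
    (hwy : ∀ i, ∀ x ∈ P.A i, ‖(w i : ℂ) • jv a α haC hαs x - y i‖ ≤ 2 * δ * P.m i) :
    ‖∑ i ∈ Finset.range P.J, ((P.m i : ℂ))⁻¹ • ((w i : ℂ) • dl Mb Ma T (P.chi i)
      - mop Mb β hβ hβs (y i) (T (P.chi i)))‖ ≤ bconst β * (‖T‖ * (2 * δ * √(μ.real G))) := by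
  set u : K → Lp ℂ 2 μ := fun k => ∑ i ∈ Finset.range P.J,
    ((P.m i : ℂ))⁻¹ • ((w i : ℂ) • Ma k (P.chi i) - (y i k) • P.chi i) with hu
  have hs : HasSum (fun k => Mb k (T (u k))) (∑ i ∈ Finset.range P.J, ((P.m i : ℂ))⁻¹ •
      ((w i : ℂ) • dl Mb Ma T (P.chi i) - mop Mb β hβ hβs (y i) (T (P.chi i)))) := by
    have h0 := hasSum_sum (s := Finset.range P.J) (fun i _ =>
      (((dl_hasSum Mb β hβ hβs Ma α hα hαs T (P.chi i)).const_smul (w i : ℂ)).sub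
        (mop_hasSum Mb β hβ hβs (y i) (T (P.chi i)))).const_smul ((P.m i : ℂ))⁻¹)
    convert h0 using 2 with k
    simp only [hu, map_sum, map_smul, map_sub]
  rw [← hs.tsum_eq]
  have hGr : 0 ≤ μ.real G := measureReal_nonneg
  refine (aux_cs _ β (fun k => ‖T‖ * ‖u k‖) hβs (‖T‖ * (2 * δ * √(μ.real G))) (by positivity)
    (fun k => ?_) (fun F => ?_)).2
  · refine (le_opNorm _ _).trans ?_
    exact mul_le_mul (hβ k) (le_opNorm _ _) (norm_nonneg _) ((norm_nonneg _).trans (hβ k))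
  · simp only [mul_pow ‖T‖]
    rw [← Finset.mul_sum]
    gcongr
    have hitg : Integrable (G.indicator fun _ => (2 * δ) ^ 2) μ :=
      (integrable_indicator_iff hG).2 (integrableOn_const hGf)
    refine (l2_sum_sq_le u F (G.indicator fun _ => (2 * δ) ^ 2) hitg ?_).trans_eq ?_
    swap
    · rw [integral_indicator_const _ hG, mul_pow _ (√_), Real.sq_sqrt hGr, smul_eq_mul, mul_comm]
    have h1 : ∀ᵐ x ∂μ, ∀ k ∈ F, u k x = ∑ i ∈ Finset.range P.J,
        (P.A i).indicator (fun x => ((P.m i : ℂ))⁻¹ * ((w i : ℂ) * a k x - y i k)) x := by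
      rw [Filter.eventually_all_finset]
      intro k _
      have h2 : ∀ᵐ x ∂μ, ∀ i ∈ Finset.range P.J,
          (((P.m i : ℂ))⁻¹ • ((w i : ℂ) • Ma k (P.chi i) - (y i k) • P.chi i) : Lp ℂ 2 μ) x =
          (P.A i).indicator (fun x => ((P.m i : ℂ))⁻¹ * ((w i : ℂ) * a k x - y i k)) x := by
        rw [Filter.eventually_all_finset]
        intro i _
        filter_upwards [Lp.coeFn_smul ((P.m i : ℂ))⁻¹ ((w i : ℂ) • Ma k (P.chi i) - (y i k) • P.chi i),
          Lp.coeFn_sub ((w i : ℂ) • Ma k (P.chi i)) ((y i k) • P.chi i),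
          Lp.coeFn_smul (w i : ℂ) (Ma k (P.chi i)), Lp.coeFn_smul (y i k) (P.chi i),
          hMa k (P.chi i), P.chi_coe i] with x e1 e2 e3 e4 e5 e6
        rw [e1, Pi.smul_apply, e2, Pi.sub_apply, e3, e4, Pi.smul_apply, Pi.smul_apply, e5, e6]
        by_cases hx : x ∈ P.A i
        · rw [Set.indicator_of_mem hx, Set.indicator_of_mem hx]; simp
        · rw [Set.indicator_of_notMem hx, Set.indicator_of_notMem hx]; simp
      filter_upwards [h2, lp_coeFn_sum (fun i => ((P.m i : ℂ))⁻¹ • ((w i : ℂ) • Ma k (P.chi i)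
        - (y i k) • P.chi i)) (Finset.range P.J)] with x e1 e2
      simp only [hu]
      rw [e2]
      exact Finset.sum_congr rfl e1
    filter_upwards [h1] with x h1
    rw [Finset.sum_congr rfl fun k hk => by rw [h1 k hk]]
    by_cases hex : ∃ i ∈ Finset.range P.J, x ∈ P.A i
    · obtain ⟨i, hi, hxi⟩ := hex
      rw [Set.indicator_of_mem (P.hsub i hxi)]
      simp only [fun k => P.sum_ind_mem
        (fun i x => ((P.m i : ℂ))⁻¹ * ((w i : ℂ) * a k x - y i k)) x i hi hxi]
      have h3 := aux_lp_sum (((P.m i : ℂ))⁻¹ • ((w i : ℂ) • jv a α haC hαs x - y i)) F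
      refine le_trans h3 ?_
      have hm := P.m_nonneg i
      gcongr
      rw [norm_smul, norm_inv, Complex.norm_real, Real.norm_of_nonneg hm]
      calc _ ≤ (P.m i)⁻¹ * (2 * δ * P.m i) := by gcongr; exact hwy i x hxi
        _ = 2 * δ * ((P.m i)⁻¹ * P.m i) := by ring
        _ ≤ 2 * δ * 1 := by gcongr; exact inv_mul_le_one
        _ = _ := by ring
    · push Not at hex
      simp only [fun k => P.sum_ind_not
        (fun i x => ((P.m i : ℂ))⁻¹ * ((w i : ℂ) * a k x - y i k)) x hex]
      simp only [norm_zero, ne_eq, OfNat.ofNat_ne_zero, not_false_eq_true, zero_pow, Finset.sum_const_zero]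
      exact Set.indicator_nonneg (fun _ _ => by positivity) _

lemma setInt_bound (hα : ∀ k, ‖Ma k‖ ≤ α k)
    (hMa : ∀ (k : K) (f : Lp ℂ 2 μ), ⇑(Ma k f) =ᵐ[μ] fun x => a k x * f x)
    (T : Lp ℂ 2 μ →L[ℂ] E)
    [Countable K] (ha : ∀ k, Measurable (a k))
    (P : PD μ (jv a α haC hαs) G C δ) (hδ : 0 ≤ δ) (hG : MeasurableSet G) (hGf : μ G ≠ ⊤)
    (A' : Set X) (hA' : MeasurableSet A') :
    ‖∫ x in A', (P.q (dl Mb Ma T) - P.s (mop Mb β hβ hβs) (jv_meas a α haC hαs ha) (bconst α)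
      (jv_norm_le a α haC hαs) T : Lp E 2 μ) x ∂μ‖ ≤ bconst β * (‖T‖ * (2 * δ * √(μ.real G))) := by
  have hXm : StronglyMeasurable (jv a α haC hαs) := jv_meas a α haC hαs ha
  have hXb : ∀ x, ‖(jv a α haC hαs) x‖ ≤ bconst α := jv_norm_le a α haC hαs
  set M := mop Mb β hβ hβs with hM
  set R := dl Mb Ma T with hR
  have hfinI : ∀ i, μ (A' ∩ P.A i) ≠ ⊤ := fun i =>
    ne_top_of_le_ne_top (P.hfin i) (measure_mono Set.inter_subset_right)
  have hXi : ∀ i, IntegrableOn (jv a α haC hαs) (A' ∩ P.A i) μ := fun i => by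
    have : IsFiniteMeasure (μ.restrict (A' ∩ P.A i)) := ⟨by simpa using (hfinI i).lt_top⟩
    exact Integrable.of_bound hXm.aestronglyMeasurable (bconst α) (Eventually.of_forall hXb)
  have hci : ∀ i (e : E), Integrable (fun _ => e) (μ.restrict (A' ∩ P.A i)) := fun i e =>
    integrableOn_const (hfinI i)
  have hcj : ∀ i (e : lp (fun _ : K => ℂ) 2), Integrable (fun _ => e) (μ.restrict (A' ∩ P.A i)) :=
    fun i e => integrableOn_const (hfinI i)
  set w : ℕ → ℝ := fun i => μ.real (A' ∩ P.A i) with hw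
  set y : ℕ → lp (fun _ : K => ℂ) 2 := fun i => ∫ x in A' ∩ P.A i, (jv a α haC hαs) x ∂μ with hy
  have key : ∫ x in A', (P.q R - P.s M hXm (bconst α) hXb T : Lp E 2 μ) x ∂μ =
      ∑ i ∈ Finset.range P.J, ((P.m i : ℂ))⁻¹ • ((w i : ℂ) • R (P.chi i) - M (y i) (T (P.chi i))) := by
    have h1 : ∀ᵐ x ∂(μ.restrict A'), (P.q R - P.s M hXm (bconst α) hXb T : Lp E 2 μ) x =
        ∑ i ∈ Finset.range P.J, (P.A i).indicator (fun x => P.av R i - M ((jv a α haC hαs) x) (P.av T i)) x := by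
      refine ae_restrict_of_ae ?_
      filter_upwards [P.q_coe R, P.s_coe M hXm (bconst α) hXb T,
        Lp.coeFn_sub (P.q R) (P.s M hXm (bconst α) hXb T)] with x e1 e2 e3
      rw [e3, Pi.sub_apply, e1, e2, ← Finset.sum_sub_distrib]
      refine Finset.sum_congr rfl fun i _ => ?_
      by_cases hx : x ∈ P.A i <;> simp [hx]
    rw [integral_congr_ae h1]
    have hMi : ∀ i t, IntegrableOn (fun x => M ((jv a α haC hαs) x) t) (A' ∩ P.A i) μ := fun i t =>
      (((ContinuousLinearMap.apply ℂ E t).comp M).integrable_comp (hXi i))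
    have hi : ∀ i, IntegrableOn (fun x => P.av R i - M ((jv a α haC hαs) x) (P.av T i)) (A' ∩ P.A i) μ := fun i =>
      (integrableOn_const (hfinI i)).sub (hMi i _)
    rw [integral_finsetSum]
    · refine Finset.sum_congr rfl fun i _ => ?_
      rw [setIntegral_indicator (P.hA i), integral_sub (hci i _) (hMi i _),
        setIntegral_const]
      have h2 : ∫ x in A' ∩ P.A i, M ((jv a α haC hαs) x) (P.av T i) ∂μ = M (y i) (P.av T i) :=
        ((ContinuousLinearMap.apply ℂ E (P.av T i)).comp M).integral_comp_comm (hXi i)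
      rw [h2, PD.av, PD.av, map_smul, smul_sub, smul_comm, ← Complex.coe_smul]
    · intro i _
      rw [integrable_indicator_iff (P.hA i), IntegrableOn, Measure.restrict_restrict (P.hA i), Set.inter_comm]
      exact hi i
  rw [key]
  refine avg_bound Mb β hβ hβs a α haC hαs Ma hα hMa T P hδ hG hGf w y fun i x hx => ?_
  have h3 : (w i : ℂ) • (jv a α haC hαs) x - y i = ∫ t in A' ∩ P.A i, ((jv a α haC hαs) x - (jv a α haC hαs) t) ∂μ := by
    rw [integral_sub (hcj i _) (hXi i), setIntegral_const, Complex.coe_smul]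
    rfl
  rw [h3]
  have h4 := norm_setIntegral_le_of_norm_le_const (C := 2 * δ) (f := fun t => (jv a α haC hαs) x - (jv a α haC hαs) t)
    (μ := μ) (hfinI i).lt_top (fun t ht => by
      have h5 := P.hball i x hx
      have h6 := P.hball i t ht.2
      have h7 : (jv a α haC hαs) x - (jv a α haC hαs) t = ((jv a α haC hαs) x - P.z i) - ((jv a α haC hαs) t - P.z i) := by abel
      rw [h7]
      linarith [norm_sub_le ((jv a α haC hαs) x - P.z i) ((jv a α haC hαs) t - P.z i), P.hrδ i])
  refine h4.trans ?_
  gcongr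
  exact measureReal_mono Set.inter_subset_right (P.hfin i)

end partG

section partH

variable {X E K : Type*} [MeasurableSpace X] {μ : Measure X} [Countable K]
  [NormedAddCommGroup E] [InnerProductSpace ℂ E] [CompleteSpace E]

lemma core_vanish [MeasurableSpace (lp (fun _ : K => ℂ) 2)] [BorelSpace (lp (fun _ : K => ℂ) 2)]
    (Mb : K → E →L[ℂ] E) (β : K → ℝ)
    (hβ : ∀ k, ‖Mb k‖ ≤ β k) (hβs : Summable fun k => β k ^ 2)
    (a : K → X → ℂ) (α : K → ℝ)
    (haC : ∀ k x, ‖a k x‖ ≤ α k) (hαs : Summable fun k => α k ^ 2)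
    (Ma : K → (Lp ℂ 2 μ →L[ℂ] Lp ℂ 2 μ)) (hα : ∀ k, ‖Ma k‖ ≤ α k)
    (hMa : ∀ (k : K) (f : Lp ℂ 2 μ), ⇑(Ma k f) =ᵐ[μ] fun x => a k x * f x)
    (T : Lp ℂ 2 μ →L[ℂ] E)
    (ha : ∀ k, Measurable (a k))
    (hcomm : ∀ k l, Commute (Mb k) (Mb l))
    (hadj : ∀ k l, Commute (Mb k) (adjoint (Mb l)))
    (hT : ∀ ε : ℝ, 0 < ε → ∃ c : ℝ, 0 ≤ c ∧ ∀ n, ‖(dl Mb Ma)^[n] T‖ ≤ c * ε ^ n)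
    (D : Set (lp (fun _ : K => ℂ) 2)) (hD : Measure.hausdorffMeasure 2 D < ⊤)
    (hjD : ∀ᵐ x ∂μ, jv a α haC hαs x ∈ D)
    (G : Set X) (hG : MeasurableSet G) (hGf : μ G ≠ ⊤) :
    dl Mb Ma T (indicatorConstLp 2 hG hGf (1 : ℂ)) = 0 := by
  have hjm := jv_meas a α haC hαs ha
  have hjb := jv_norm_le a α haC hαs
  obtain ⟨C, hC, hP⟩ := exists_PD μ _ hjm G hG hGf D hD hjD
  set δ : ℕ → ℝ := fun n => 1 / ((n : ℝ) + 1) with hδ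
  have hδ0 : ∀ n, 0 < δ n := fun n => by positivity
  have hδl : Tendsto δ atTop (nhds 0) := tendsto_one_div_add_atTop_nhds_zero_nat
  have P : ∀ n, PD μ (jv a α haC hαs) G C (δ n) := fun n => (hP (δ n) (hδ0 n)).some
  set R := dl Mb Ma T with hR
  set M := mop Mb β hβ hβs with hM
  have hB := bconst_nonneg β
  have hloc := fun (n i : ℕ) => key_local' Mb β hβ hβs Ma α hα hαs hcomm hadj T hT
    (suppSub μ ((P n).A i)) (fun k u hu => suppSub_inv a Ma hMa _ k u hu) ((P n).z i) ((P n).r i)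
    ((P n).hr0 i) (fun u hu F => suppSub_est a α haC hαs Ma hMa _ _ _ ((P n).hr0 i)
      ((P n).hball i) u hu F) ((P n).chi i) ((P n).chi_mem i)
  simp only [PD.chi_norm] at hloc
  set κ : ℝ := √((4 * (bconst β * ‖T‖)) ^ 2 * C) with hκ
  have hqb : ∀ n, ‖(P n).q R‖ ≤ κ := fun n => by
    refine Real.le_sqrt_of_sq_le (((P n).q_norm_le R (2 * (bconst β * ‖T‖)) fun i => ?_).trans ?_)
    · exact (hloc n i).2.1.trans_eq (by ring)
    · have : 0 ≤ bconst β * ‖T‖ := by positivity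
      gcongr
      norm_num
  have hdb : ∀ n, ‖(P n).q R - (P n).s M hjm (bconst α) hjb T‖ ≤ κ := fun n => by
    refine Real.le_sqrt_of_sq_le ((P n).d_norm_le M hjm (bconst α) hjb R T (bconst β) ‖T‖ hB
      (mop_norm_le Mb β hβ hβs) (fun u => le_opNorm _ _) (fun i => ?_) (fun i => ?_))
    · exact (hloc n i).2.1.trans_eq (by ring)
    · exact (hloc n i).1.trans_eq (by ring)
  rw [← inner_self_eq_zero (𝕜 := ℂ)]
  set e := R (indicatorConstLp 2 hG hGf (1 : ℂ)) with he
  refine aux_weak (fun n => (P n).q R) (fun n => (P n).s M hjm (bconst α) hjb T) κ hqb hdb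
    (fun l => ?_) (fun n => ?_) (indicatorConstLp 2 hG hGf e) _ ?_
  · have hbd : ∀ n, ‖inner ℂ ((P l).q R) ((P n).q R - (P n).s M hjm (bconst α) hjb T)‖ ≤
        (∑ i ∈ Finset.range (P l).J, ‖(P l).av R i‖) *
          (bconst β * (‖T‖ * (2 * δ n * √(μ.real G)))) := by
      intro n
      rw [PD.q, sum_inner, Finset.sum_mul]
      refine (norm_sum_le _ _).trans (Finset.sum_le_sum fun i _ => ?_)
      rw [L2.inner_indicatorConstLp_eq_inner_setIntegral]
      refine (norm_inner_le_norm _ _).trans ?_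
      gcongr
      exact setInt_bound Mb β hβ hβs a α haC hαs Ma hα hMa T ha (P n) (hδ0 n).le hG hGf _ ((P l).hA i)
    refine squeeze_zero_norm hbd ?_
    have h := ((((hδl.const_mul 2).mul_const (√(μ.real G))).const_mul ‖T‖).const_mul
      (bconst β)).const_mul (∑ i ∈ Finset.range (P l).J, ‖(P l).av R i‖)
    simpa using h
  · have hbd : ∀ l, ‖inner ℂ ((P l).q R) ((P n).s M hjm (bconst α) hjb T)‖ ≤
        (2 * bconst β * δ l * κ) * ∑ j ∈ Finset.range (P n).J,
        ‖indicatorConstLp 2 ((P n).hA j) ((P n).hfin j) ((P n).av T j)‖ := by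
      intro l
      refine ((P l).q_s_inner M hjm (bconst α) hjb (P n) R T (bconst β) hB (hδ0 l).le
        (mop_norm_le Mb β hβ hβs) (mop_normal Mb β hβ hβs hadj) (fun i => (hloc l i).2.2)).trans ?_
      have := (hδ0 l).le
      gcongr
      exact hqb l
    refine squeeze_zero_norm hbd ?_
    have h := ((hδl.const_mul (2 * bconst β)).mul_const κ).mul_const
      (∑ j ∈ Finset.range (P n).J, ‖indicatorConstLp 2 ((P n).hA j) ((P n).hfin j) ((P n).av T j)‖)
    simpa using h
  · simp only [fun n => (P n).q_const_inner R hG hGf e]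
    have h1 : Tendsto (fun n => ∑ i ∈ Finset.range (P n).J, (P n).chi i) atTop
        (nhds (indicatorConstLp 2 hG hGf (1 : ℂ))) := by
      rw [tendsto_iff_norm_sub_tendsto_zero]
      refine squeeze_zero (fun n => norm_nonneg _)
        (fun n => (P n).chi_sum_close (hδ0 n).le hG hGf) ?_
      simpa using hδl.sqrt
    exact ((R.continuous.tendsto _).comp h1).inner tendsto_const_nhds

lemma op_zero_of_ind (R : Lp ℂ 2 μ →L[ℂ] E)
    (h : ∀ (G : Set X) (hG : MeasurableSet G) (hGf : μ G ≠ ⊤),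
      R (indicatorConstLp 2 hG hGf (1 : ℂ)) = 0) : R = 0 := by
  ext1 f
  show R f = 0
  refine Lp.induction (p := 2) (by norm_num) (fun f => R f = 0) ?_ ?_ ?_ f
  · intro c s hs hμs
    rw [Lp.simpleFunc.coe_indicatorConst]
    have h1 : indicatorConstLp 2 hs hμs.ne c = c • indicatorConstLp 2 hs hμs.ne (1 : ℂ) := by
      apply Lp.ext
      filter_upwards [Lp.coeFn_smul c (indicatorConstLp 2 hs hμs.ne (1 : ℂ)),
        indicatorConstLp_coeFn (p := 2) (hs := hs) (hμs := hμs.ne) (c := c),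
        indicatorConstLp_coeFn (p := 2) (hs := hs) (hμs := hμs.ne) (c := (1 : ℂ))] with x e1 e2 e3
      rw [e1, e2, Pi.smul_apply, e3]
      by_cases hx : x ∈ s <;> simp [hx]
    rw [h1, map_smul, h s hs hμs.ne, smul_zero]
  · intro f g hf hg _ h1 h2
    rw [map_add, h1, h2, add_zero]
  · exact isClosed_eq R.continuous continuous_const

end partH

/-- For a multiplication operator `Δ(T) = ∑ k M_{b k} T M_{a k}` with commuting normal
coefficients whose left coefficient family has essential Hausdorff dimension at most 2
(the joint values `(a k x)ₖ` lie a.e. in a set `D ⊆ ℓ²(K)` of finite two-dimensional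
Hausdorff measure), the 0-spectral subspace of `Δ` coincides with `ker Δ`:
`‖Δⁿ(T)‖^{1/n} → 0` iff `Δ(T) = 0`. -/
theorem zero_spectral_subspace_eq_ker
    {X Y : Type*} [MeasurableSpace X] [MeasurableSpace Y]
    [StandardBorelSpace X] [StandardBorelSpace Y]
    (μ : Measure X) (ν : Measure Y) [SigmaFinite μ] [SigmaFinite ν]
    {K : Type*} [Countable K]
    [MeasurableSpace (lp (fun _ : K => ℂ) 2)] [BorelSpace (lp (fun _ : K => ℂ) 2)]
    (a : K → X → ℂ) (b : K → Y → ℂ)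
    (ha : ∀ k, Measurable (a k)) (hb : ∀ k, Measurable (b k))
    (Ca Cb : K → ℝ)
    (haC : ∀ k x, ‖a k x‖ ≤ Ca k) (hbC : ∀ k y, ‖b k y‖ ≤ Cb k)
    (hCa : Summable fun k => Ca k ^ 2) (hCb : Summable fun k => Cb k ^ 2)
    (Ma : K → (Lp ℂ 2 μ →L[ℂ] Lp ℂ 2 μ)) (Mb : K → (Lp ℂ 2 ν →L[ℂ] Lp ℂ 2 ν))
    (hMa : ∀ (k : K) (f : Lp ℂ 2 μ), ⇑(Ma k f) =ᵐ[μ] fun x => a k x * f x)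
    (hMb : ∀ (k : K) (g : Lp ℂ 2 ν), ⇑(Mb k g) =ᵐ[ν] fun y => b k y * g y)
    (D : Set (lp (fun _ : K => ℂ) 2))
    (hD : Measure.hausdorffMeasure 2 D < ⊤)
    (haD : ∀ᵐ x ∂μ, ∃ lam : lp (fun _ : K => ℂ) 2, lam ∈ D ∧ ∀ k, lam k = a k x)
    (T : Lp ℂ 2 μ →L[ℂ] Lp ℂ 2 ν) :
    Tendsto
      (fun n : ℕ =>
        ‖(fun S : Lp ℂ 2 μ →L[ℂ] Lp ℂ 2 ν => ∑' k, Mb k ∘L S ∘L Ma k)^[n] T‖ ^ ((1 : ℝ) / n))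
      atTop (nhds 0) ↔
    (∑' k, Mb k ∘L T ∘L Ma k) = 0 := by
  constructor
  · intro h
    have hT : ∀ ε : ℝ, 0 < ε → ∃ c : ℝ, 0 ≤ c ∧ ∀ n, ‖(dl Mb Ma)^[n] T‖ ≤ c * ε ^ n :=
      fun ε hε => aux_growth (fun n => (dl Mb Ma)^[n] T) h ε hε
    have haC' : ∀ k x, ‖a k x‖ ≤ |Ca k| := fun k x => (haC k x).trans (le_abs_self _)
    have hbC' : ∀ k x, ‖b k x‖ ≤ |Cb k| := fun k x => (hbC k x).trans (le_abs_self _)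
    have hαs : Summable fun k => |Ca k| ^ 2 := by simpa only [sq_abs] using hCa
    have hβs : Summable fun k => |Cb k| ^ 2 := by simpa only [sq_abs] using hCb
    refine op_zero_of_ind (dl Mb Ma T) fun G hG hGf => ?_
    refine core_vanish Mb (fun k => |Cb k|)
      (fun k => mul_norm_le (b k) _ (abs_nonneg _) (hbC' k) (Mb k) (hMb k)) hβs
      a (fun k => |Ca k|) haC' hαs Ma
      (fun k => mul_norm_le (a k) _ (abs_nonneg _) (haC' k) (Ma k) (hMa k)) hMa T ha
      (fun k l => mul_commute (b k) (b l) _ _ (hMb k) (hMb l))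
      (fun k l => mul_adj_commute (b k) (b l) (hb l) _ (hbC' l) _ _ (hMb k) (hMb l))
      hT D hD ?_ G hG hGf
    filter_upwards [haD] with x hx
    obtain ⟨lam, hl, hlk⟩ := hx
    have : jv a (fun k => |Ca k|) haC' hαs x = lam := by
      ext k
      rw [jv_apply, hlk k]
    rwa [this]
  · intro h
    have hz : ∀ n : ℕ, (fun S : Lp ℂ 2 μ →L[ℂ] Lp ℂ 2 ν => ∑' k, Mb k ∘L S ∘L Ma k)^[n + 1] T = 0 := by
      intro n
      induction n with
      | zero => simpa using h
      | succ n ih =>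
        rw [Function.iterate_succ_apply', ih]
        simp
    refine tendsto_const_nhds.congr' ?_
    filter_upwards [eventually_ge_atTop 1] with n hn
    obtain ⟨m, rfl⟩ := Nat.exists_eq_add_of_le' hn
    rw [hz m, norm_zero, Real.zero_rpow]
    positivity
end
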